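/- arXiv:1807.07888 — 3 statements merged into one kernel-verified Lean document; each statement's English description precedes it below -/
import Mathlib

section
/- Let (E, ∇) be a flat connection on F₁ = k((t)), char k = 0, E finite-dimensional over F₁. Then coker(∇: E → E ⊗ Ω¹_{F₁}) is a finite-dimensional k-vector space. -/
/-- Laurent series vanishing below degree `m`. -/
def connFil (k : Type*) [Field k] (m : ℤ) : Submodule k (LaurentSeries k) where
  carrier := {g | ∀ j < m, g.coeff j = 0}
  add_mem' := by
    intro a b ha hb j hj
    simp [ha j hj, hb j hj]
  zero_mem' := by intro j _; simp
  smul_mem' := by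
    intro c a ha j hj
    simp [ha j hj]

theorem mem_connFil {k : Type*} [Field k] {m : ℤ} {g : LaurentSeries k} :
    g ∈ connFil k m ↔ ∀ j < m, g.coeff j = 0 := Iff.rfl

theorem single_mem_connFil {k : Type*} [Field k] (m : ℤ) (a : k) :
    (HahnSeries.single m a : LaurentSeries k) ∈ connFil k m := by
  intro j hj
  exact HahnSeries.coeff_single_of_ne hj.ne

theorem connFil_mono {k : Type*} [Field k] {m n : ℤ} (h : m ≤ n) {g : LaurentSeries k}
    (hg : g ∈ connFil k n) : g ∈ connFil k m := fun j hj => hg j (hj.trans_le h)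

theorem connFil_succ {k : Type*} [Field k] {m : ℤ} {g : LaurentSeries k}
    (hg : g ∈ connFil k m) (h0 : g.coeff m = 0) : g ∈ connFil k (m + 1) := by
  intro j hj
  rcases eq_or_lt_of_le (Int.lt_add_one_iff.mp hj) with h | h
  · rw [h, h0]
  · exact hg j h

theorem conn_complete {k : Type*} [Field k] (L : LaurentSeries k →ₗ[k] LaurentSeries k)
    (c : ℤ) (φ : ℤ → k)
    (hF : ∀ m, ∀ g ∈ connFil k m, L g ∈ connFil k (m + c))
    (hφ : ∀ m, ∀ g ∈ connFil k m, (L g).coeff (m + c) = φ m * g.coeff m)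
    (B : ℤ) (hB : ∀ m, B ≤ m → φ m ≠ 0) (h : LaurentSeries k) (hh : h ∈ connFil k (B + c)) :
    h ∈ LinearMap.range L := by
  classical
  let G : ℕ → LaurentSeries k := fun n => Nat.rec 0
    (fun n g => g + HahnSeries.single (B + n) ((h - L g).coeff (B + n + c) / φ (B + n))) n
  have G0 : G 0 = 0 := rfl
  have GS : ∀ n : ℕ, G (n + 1) = G n +
    HahnSeries.single (B + n) ((h - L (G n)).coeff (B + n + c) / φ (B + n)) := fun n => rfl
  have inv : ∀ n : ℕ, h - L (G n) ∈ connFil k (B + n + c) := by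
    intro n
    induction n with
    | zero => simpa [G0] using hh
    | succ n ih =>
      have hs := single_mem_connFil (B + n) ((h - L (G n)).coeff (B + n + c) / φ (B + n))
      have e : h - L (G (n + 1)) = (h - L (G n)) - L (HahnSeries.single (B + n)
          ((h - L (G n)).coeff (B + n + c) / φ (B + n))) := by
        rw [GS, map_add]; abel
      have : (B + ((n + 1 : ℕ) : ℤ) + c) = (B + n + c) + 1 := by push_cast; ring
      rw [this, e]
      apply connFil_succ
      · exact Submodule.sub_mem _ ih (hF _ _ hs)
      · rw [HahnSeries.coeff_sub, hφ _ _ hs, HahnSeries.coeff_single_same,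
          mul_div_cancel₀ _ (hB _ (by omega)), sub_self]
  have stab : ∀ (m d : ℕ) (j : ℤ), j < B + m → (G (m + d)).coeff j = (G m).coeff j := by
    intro m d j hj
    induction d with
    | zero => rfl
    | succ d ih =>
      rw [← add_assoc, GS, HahnSeries.coeff_add, ih, HahnSeries.coeff_single_of_ne, add_zero]
      push_cast; omega
  let g : LaurentSeries k := HahnSeries.ofSuppBddBelow
    (fun j => (G (j - B + 1).toNat).coeff j) (by
      refine ⟨B, fun j hj => ?_⟩
      by_contra hlt
      apply hj
      have : (j - B + 1).toNat = 0 := by omega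
      simp [this, G0])
  have hg : ∀ n : ℕ, g - G n ∈ connFil k (B + n) := by
    intro n j hj
    have h1 : g.coeff j = (G (j - B + 1).toNat).coeff j := rfl
    have h2 := stab (j - B + 1).toNat (n - (j - B + 1).toNat) j (by omega)
    rw [show (j - B + 1).toNat + (n - (j - B + 1).toNat) = n by omega] at h2
    rw [HahnSeries.coeff_sub, h1, h2, sub_self]
  refine ⟨g, ?_⟩
  rw [← sub_eq_zero]
  ext j
  have hn := (j - B - c + 1).toNat
  have key : L g - h ∈ connFil k (B + ((j - B - c + 1).toNat : ℕ) + c) := by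
    have e : L g - h = L (g - G (j - B - c + 1).toNat) - (h - L (G (j - B - c + 1).toNat)) := by
      rw [map_sub]; abel
    rw [e]
    exact Submodule.sub_mem _ (hF _ _ (hg _)) (inv _)
  rw [key j (by omega)]
  simp

theorem conn_sup {k : Type*} [Field k] (L : LaurentSeries k →ₗ[k] LaurentSeries k)
    (c : ℤ) (φ : ℤ → k)
    (hF : ∀ m, ∀ g ∈ connFil k m, L g ∈ connFil k (m + c))
    (hφ : ∀ m, ∀ g ∈ connFil k m, (L g).coeff (m + c) = φ m * g.coeff m)
    (hfin : {m | φ m = 0}.Finite) :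
    ∃ S : Submodule k (LaurentSeries k), S.FG ∧ LinearMap.range L ⊔ S = ⊤ := by
  classical
  obtain ⟨B, hB⟩ := hfin.bddAbove
  let s : Set (LaurentSeries k) :=
    (fun m : ℤ => (HahnSeries.single (m + c) (1 : k) : LaurentSeries k)) '' {m | φ m = 0}
  refine ⟨Submodule.span k s, Submodule.fg_span (hfin.image _), ?_⟩
  rw [eq_top_iff]
  have main : ∀ n : ℕ, ∀ h ∈ connFil k (B + 1 - n + c),
      h ∈ LinearMap.range L ⊔ Submodule.span k s := by
    intro n
    induction n with
    | zero =>
      intro h hh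
      apply Submodule.mem_sup_left
      refine conn_complete L c φ hF hφ (B + 1) ?_ h (by simpa using hh)
      intro m hm h0
      have := hB h0
      omega
    | succ n ih =>
      intro h hh
      set m : ℤ := B + 1 - ((n + 1 : ℕ) : ℤ) with hm
      have hm1 : B + 1 - (n : ℤ) + c = m + c + 1 := by rw [hm]; push_cast; ring
      rw [hm1] at ih
      by_cases h0 : φ m = 0
      · have h1 : h - h.coeff (m + c) • (HahnSeries.single (m + c) (1 : k) : LaurentSeries k)
            ∈ connFil k (m + c + 1) := by
          apply connFil_succ
          · exact Submodule.sub_mem _ hh (Submodule.smul_mem _ _ (single_mem_connFil _ _))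
          · simp
        have h2 : h.coeff (m + c) • (HahnSeries.single (m + c) (1 : k) : LaurentSeries k)
            ∈ LinearMap.range L ⊔ Submodule.span k s :=
          Submodule.mem_sup_right (Submodule.smul_mem _ _ (Submodule.subset_span ⟨m, h0, rfl⟩))
        simpa using Submodule.add_mem _ (ih _ h1) h2
      · have hs := single_mem_connFil m (h.coeff (m + c) / φ m)
        have h1 : h - L (HahnSeries.single m (h.coeff (m + c) / φ m))
            ∈ connFil k (m + c + 1) := by
          apply connFil_succ
          · exact Submodule.sub_mem _ hh (hF _ _ hs)
          · rw [HahnSeries.coeff_sub, hφ _ _ hs, HahnSeries.coeff_single_same,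
              mul_div_cancel₀ _ h0, sub_self]
        have h2 : L (HahnSeries.single m (h.coeff (m + c) / φ m))
            ∈ LinearMap.range L ⊔ Submodule.span k s :=
          Submodule.mem_sup_left ⟨_, rfl⟩
        simpa using Submodule.add_mem _ (ih _ h1) h2
  intro h _
  refine main (B + 1 + c - h.order).toNat h ?_
  intro j hj
  apply HahnSeries.coeff_eq_zero_of_lt_order
  omega

theorem conn_mul_mem {k : Type*} [Field k] {p q : ℤ} {x y : LaurentSeries k}
    (hx : x ∈ connFil k p) (hy : y ∈ connFil k q) : x * y ∈ connFil k (p + q) := by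
  intro j hj
  rw [HahnSeries.coeff_mul]
  apply Finset.sum_eq_zero
  rintro ⟨a, b⟩ hab
  simp only [Finset.mem_antidiagonal] at hab
  by_cases h : a < p
  · simp [hx a h]
  · simp [hy b (by omega)]

theorem conn_mul_coeff {k : Type*} [Field k] {p q : ℤ} {x y : LaurentSeries k}
    (hx : x ∈ connFil k p) (hy : y ∈ connFil k q) :
    (x * y).coeff (p + q) = x.coeff p * y.coeff q := by
  rw [HahnSeries.coeff_mul]
  apply Finset.sum_eq_single (p, q)
  · rintro ⟨a, b⟩ hab hne
    simp only [Finset.mem_antidiagonal] at hab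
    by_cases h : a < p
    · simp [hx a h]
    · by_cases h' : b < q
      · simp [hy b h']
      · exfalso; apply hne
        ext <;> simp <;> omega
  · intro hn
    simp only [Finset.mem_antidiagonal, HahnSeries.mem_support, and_true] at hn
    by_cases h : x.coeff p = 0
    · simp [h]
    · have : y.coeff q = 0 := by tauto
      simp [this]

theorem conn_poly {k : Type*} [Field k] [CharZero k] (n : ℕ) (α : ℕ → k)
    (h : ∃ i ∈ Finset.range n, α i ≠ 0) (c : ℤ) :
    {m : ℤ | ∑ i ∈ Finset.range n, α i * (descPochhammer k i).eval ((m : k) + c + i) = 0}.Finite := by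
  classical
  let Q : Polynomial k := ∑ i ∈ Finset.range n,
    Polynomial.C (α i) * (descPochhammer k i).comp (Polynomial.X + Polynomial.C (i : k))
  have hQ : Q ≠ 0 := by
    obtain ⟨i, hi, hi0⟩ := h
    have hne : ((Finset.range n).filter (fun i => α i ≠ 0)).Nonempty :=
      ⟨i, by simp [hi0, Finset.mem_range.mp hi]⟩
    obtain ⟨d, hd, hmax⟩ := Finset.exists_max_image _ (fun i : ℕ => i) hne
    rw [Finset.mem_filter] at hd
    intro hz
    have hc : Q.coeff d = α d := by
      simp only [Q, Polynomial.finsetSum_coeff, Polynomial.coeff_C_mul]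
      rw [Finset.sum_eq_single d]
      · have hmon : ((descPochhammer k d).comp
            (Polynomial.X + Polynomial.C (d : k))).Monic :=
          (monic_descPochhammer k d).comp_X_add_C _
        have hdeg : ((descPochhammer k d).comp
            (Polynomial.X + Polynomial.C (d : k))).natDegree = d := by
          rw [Polynomial.natDegree_comp, descPochhammer_natDegree, Polynomial.natDegree_X_add_C,
            mul_one]
        have := hmon.coeff_natDegree
        rw [hdeg] at this
        rw [this, mul_one]
      · intro b hb hbd
        by_cases h0 : α b = 0
        · simp [h0]
        · have hle : b ≤ d := hmax b (by simp [h0, Finset.mem_range.mp hb])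
          rw [Polynomial.coeff_eq_zero_of_natDegree_lt, mul_zero]
          rw [Polynomial.natDegree_comp, descPochhammer_natDegree, Polynomial.natDegree_X_add_C,
            mul_one]
          omega
      · intro hn; exact absurd hd.1 hn
    rw [hz] at hc
    exact hd.2 (by simpa using hc.symm)
  have hf : {x : k | Q.IsRoot x}.Finite := Polynomial.finite_setOfPred_isRoot hQ
  have hinj : Function.Injective (fun m : ℤ => (m : k) + c) := by
    intro a b hab
    simpa using hab
  refine (hf.preimage hinj.injOn).subset ?_
  intro m hm
  simp only [Set.mem_preimage, Set.mem_ofPred_eq, Polynomial.IsRoot.def, Q,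
    Polynomial.eval_finsetSum, Polynomial.eval_mul, Polynomial.eval_C, Polynomial.eval_comp,
    Polynomial.eval_add, Polynomial.eval_X] at hm ⊢
  exact hm

theorem conn_mul_smul {k : Type*} [Field k] (r : k) (a g : LaurentSeries k) :
    a * (r • g) = r • (a * g) := by
  rw [← HahnSeries.C_mul_eq_smul, ← HahnSeries.C_mul_eq_smul]
  ring

/-- Multiplication by `a` as a `k`-linear map. -/
noncomputable def connMul {k : Type*} [Field k] (a : LaurentSeries k) :
    LaurentSeries k →ₗ[k] LaurentSeries k where
  toFun g := a * g
  map_add' := mul_add a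
  map_smul' r g := conn_mul_smul r a g

theorem connMul_apply {k : Type*} [Field k] (a g : LaurentSeries k) :
    connMul a g = a * g := rfl

/-- The formal adjoint of the operator `∑ a i ∂ ^ i`. -/
noncomputable def connAdj {k : Type*} [Field k] (n : ℕ) (a : ℕ → LaurentSeries k) :
    LaurentSeries k →ₗ[k] LaurentSeries k :=
  ∑ i ∈ Finset.range n, ((-1 : k) ^ i) •
    (((LaurentSeries.derivative k : LaurentSeries k →ₗ[k] LaurentSeries k) ^ i).comp
      (connMul (a i)))

theorem connAdj_apply {k : Type*} [Field k] (n : ℕ) (a : ℕ → LaurentSeries k)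
    (g : LaurentSeries k) : connAdj n a g = ∑ i ∈ Finset.range n, ((-1 : k) ^ i) •
      ((LaurentSeries.derivative k)^[i] (a i * g)) := by
  simp [connAdj, connMul_apply, LinearMap.sum_apply, Module.End.pow_apply, -LaurentSeries.derivative_apply]

theorem connAdj_coeff {k : Type*} [Field k] (n : ℕ) (a : ℕ → LaurentSeries k)
    (g : LaurentSeries k) (j : ℤ) : (connAdj n a g).coeff j = ∑ i ∈ Finset.range n,
      (-1 : k) ^ i * ((descPochhammer k i).eval ((j : k) + i) * (a i * g).coeff (j + i)) := by
  rw [connAdj_apply, HahnSeries.coeff_sum]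
  refine Finset.sum_congr rfl fun i _ => ?_
  rw [HahnSeries.coeff_smul, LaurentSeries.derivative_iterate_coeff, smul_eq_mul, zsmul_eq_mul]
  congr 2
  rw [← Polynomial.eval_eq_smeval, descPochhammer_eval_cast]
  simp

theorem connAdj_sup {k : Type*} [Field k] [CharZero k] (n : ℕ) (a : ℕ → LaurentSeries k)
    (ha : ∃ i ∈ Finset.range n, a i ≠ 0) :
    ∃ S : Submodule k (LaurentSeries k), S.FG ∧ LinearMap.range (connAdj n a) ⊔ S = ⊤ := by
  classical
  obtain ⟨i, hi, hi0⟩ := ha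
  have hne : ((Finset.range n).filter (fun i => a i ≠ 0)).Nonempty :=
    ⟨i, by simp [hi0, Finset.mem_range.mp hi]⟩
  obtain ⟨d, hd, hmin⟩ := Finset.exists_min_image _ (fun i : ℕ => (a i).order - (i : ℤ)) hne
  rw [Finset.mem_filter] at hd
  set c : ℤ := (a d).order - (d : ℤ) with hc
  have hac : ∀ i ∈ Finset.range n, a i ∈ connFil k (c + i) := by
    intro i hi j hj
    by_cases h0 : a i = 0
    · simp [h0]
    · have := hmin i (by simp [h0, Finset.mem_range.mp hi])
      apply HahnSeries.coeff_eq_zero_of_lt_order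
      omega
  refine conn_sup (connAdj n a) c (fun m => ∑ i ∈ Finset.range n,
    ((-1 : k) ^ i * (a i).coeff (c + i)) * (descPochhammer k i).eval ((m : k) + c + i)) ?_ ?_ ?_
  · intro m g hg j hj
    rw [connAdj_coeff]
    apply Finset.sum_eq_zero
    intro i hi
    rw [conn_mul_mem (hac i hi) hg (j + i) (by omega)]
    simp
  · intro m g hg
    rw [connAdj_coeff, Finset.sum_mul]
    refine Finset.sum_congr rfl fun i hi => ?_
    rw [show m + c + (i : ℤ) = c + i + m by ring, conn_mul_coeff (hac i hi) hg]
    push_cast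
    ring
  · refine conn_poly n (fun i => (-1 : k) ^ i * (a i).coeff (c + i)) ⟨d, hd.1, ?_⟩ c
    have : c + (d : ℤ) = (a d).order := by omega
    simp only [this]
    refine mul_ne_zero (pow_ne_zero _ (by simp)) ?_
    exact HahnSeries.coeff_order_eq_zero.not.mpr hd.2

/-- Let `(E, ∇)` be a flat connection on `F₁ = k((t))` (char k = 0), with `E`
finite-dimensional over `F₁`; `∇ : E → E ⊗ Ω¹ ≅ E` is `k`-linear and satisfies the Leibniz
rule (after trivializing `Ω¹ = F₁·dt`). Then `coker ∇ = E/∇(E)` is a finite-dimensional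
`k`-vector space. -/
theorem finiteDimensional_coker_of_connection
    (k : Type*) [Field k] [CharZero k]
    (E : Type*) [AddCommGroup E] [Module (LaurentSeries k) E]
    [FiniteDimensional (LaurentSeries k) E]
    [Module k E] [IsScalarTower k (LaurentSeries k) E]
    (D : E →ₗ[k] E)
    (leibniz : ∀ (f : LaurentSeries k) (e : E),
      D (f • e) = LaurentSeries.derivative k f • e + f • D e) :
    FiniteDimensional k (E ⧸ LinearMap.range D) := by
  classical
  let π := (LinearMap.range D).mkQ
  let T : E → (LaurentSeries k →ₗ[k] E ⧸ LinearMap.range D) := fun e =>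
    π.comp ((LinearMap.toSpanSingleton (LaurentSeries k) E e).restrictScalars k)
  have T_apply : ∀ e f, T e f = π (f • e) := fun e f => rfl
  have step : ∀ (f : LaurentSeries k) (e : E),
      π ((LaurentSeries.derivative k f) • e) = - π (f • D e) := by
    intro f e
    have h0 : π (D (f • e)) = 0 := by
      simp [π]
    rw [leibniz, map_add] at h0
    exact eq_neg_of_add_eq_zero_left h0
  have steps : ∀ (i : ℕ) (f : LaurentSeries k) (e : E),
      π (((LaurentSeries.derivative k)^[i] f) • e) = ((-1 : k) ^ i) • π (f • (D^[i] e)) := by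
    intro i
    induction i with
    | zero => intro f e; simp
    | succ i ih =>
      intro f e
      rw [Function.iterate_succ_apply', step, ih, ← Function.iterate_succ_apply, pow_succ]
      simp
  have hfg : ∀ e, (LinearMap.range (T e)).FG := by
    intro e
    have hdep : ¬ LinearIndependent (LaurentSeries k)
        (fun i : Fin (Module.finrank (LaurentSeries k) E + 1) => D^[(i : ℕ)] e) := by
      intro hli
      have := hli.fintype_card_le_finrank
      simp at this
    generalize Module.finrank (LaurentSeries k) E + 1 = n at hdep
    rw [Fintype.not_linearIndependent_iff] at hdep
    obtain ⟨b, hb, i0, hi0⟩ := hdep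
    let a : ℕ → LaurentSeries k := fun i => if h : i < n then b ⟨i, h⟩ else 0
    have hab : ∀ i : Fin n, a i = b i := fun i => by simp [a]
    obtain ⟨S, hS, hST⟩ := connAdj_sup n a
      ⟨i0, by simp, by rw [hab]; exact hi0⟩
    have hrel : ∑ i ∈ Finset.range n, a i • D^[i] e = 0 := by
      rw [Finset.sum_range, ← hb]
      exact Finset.sum_congr rfl fun i _ => by rw [hab]
    have hkill : ∀ g, T e (connAdj n a g) = 0 := by
      intro g
      rw [connAdj_apply, map_sum]
      have : ∀ i ∈ Finset.range n, T e (((-1 : k) ^ i) •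
          ((LaurentSeries.derivative k)^[i] (a i * g))) = π (g • (a i • D^[i] e)) := by
        intro i _
        rw [map_smul, T_apply, steps, smul_smul, ← mul_pow, mul_comm (a i) g, mul_smul]
        simp
      rw [Finset.sum_congr rfl this, ← map_sum, ← Finset.smul_sum, hrel, smul_zero, map_zero]
    have hr : LinearMap.range (T e) = S.map (T e) := by
      rw [LinearMap.range_eq_map (T e), ← hST, Submodule.map_sup, sup_eq_right]
      rintro _ ⟨_, ⟨g, rfl⟩, rfl⟩
      rw [hkill]
      exact Submodule.zero_mem _
    rw [hr]
    exact hS.map _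
  let bs := Module.finBasis (LaurentSeries k) E
  have htop : (⨆ i, LinearMap.range (T (bs i))) = ⊤ := by
    rw [eq_top_iff]
    intro x _
    obtain ⟨x, rfl⟩ := (LinearMap.range D).mkQ_surjective x
    rw [← bs.sum_repr x, map_sum]
    refine Submodule.sum_mem _ fun i _ => ?_
    exact Submodule.mem_iSup_of_mem i ⟨bs.repr x i, rfl⟩
  refine Module.finite_def.mpr ?_
  rw [← htop]
  exact Submodule.fg_iSup _ fun i => hfg _
end

section
/- Let (E, ∇) be a flat connection on F₁ = k((t)), char k = 0, and ∇^∨ the dual connection on E^∨ = Hom_{F₁}(E, F₁). Under the residue pairing identification of the topological k-dual of E with E^∨ ⊗ Ω¹, the kernel of ∇^∨ maps isomorphically onto a k-space dual to coker(∇); in particular dim_k coker(∇) = dim_k ker(∇^∨). -/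
set_option maxHeartbeats 2000000
set_option synthInstance.maxHeartbeats 2000000

universe u v

namespace KerDual
open HahnSeries

variable {k : Type u} [Field k]

theorem deriv_coeff (f : LaurentSeries k) (n : ℤ) :
    (LaurentSeries.derivative k f).coeff n = ((n : k) + 1) * f.coeff (n + 1) := by
  rw [LaurentSeries.derivative_apply, LaurentSeries.hasseDeriv_coeff]
  simp [zsmul_eq_mul]

theorem smul_one_eq (c : k) : (c • (1 : LaurentSeries k)) = single 0 c := by
  ext j
  rw [HahnSeries.coeff_smul, HahnSeries.coeff_one, coeff_single]
  split_ifs <;> simp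

noncomputable def emb (N : ℤ) (h : PowerSeries k) : LaurentSeries k :=
  single N 1 * ofPowerSeries ℤ k h

theorem ofPS_coeff (h : PowerSeries k) (m : ℤ) :
    (ofPowerSeries ℤ k h).coeff m = if 0 ≤ m then PowerSeries.coeff m.toNat h else 0 := by
  split_ifs with hm
  · obtain ⟨n, rfl⟩ := Int.eq_ofNat_of_zero_le hm
    exact ofPowerSeries_apply_coeff h n
  · rw [ofPowerSeries_apply, embDomain_of_notMem_range]
    rintro ⟨n, hn⟩
    simp at hn
    omega

theorem emb_coeff (N : ℤ) (h : PowerSeries k) (j : ℤ) :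
    (emb N h).coeff j = if N ≤ j then PowerSeries.coeff (j - N).toNat h else 0 := by
  rw [emb, coeff_single_mul, ofPS_coeff, one_mul]
  simp

theorem eq_emb (N : ℤ) (f : LaurentSeries k) (hf : ∀ j < N, f.coeff j = 0) :
    f = emb N (PowerSeries.mk fun m => f.coeff (N + m)) := by
  ext j
  rw [emb_coeff]
  split_ifs with hj
  · simp [hj]
  · exact hf j (by omega)

noncomputable def A (N : ℤ) (h : PowerSeries k) : PowerSeries k :=
  PowerSeries.mk fun m => (-((N : k) + m + 1)) * PowerSeries.coeff m h

theorem A_iter_coeff (N : ℤ) (i : ℕ) (h : PowerSeries k) (m : ℕ) :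
    PowerSeries.coeff m ((A N)^[i] h) = (-((N : k) + m + 1)) ^ i * PowerSeries.coeff m h := by
  induction i with
  | zero => simp
  | succ i ih =>
    rw [Function.iterate_succ_apply', A, PowerSeries.coeff_mk, ih, pow_succ]
    ring

theorem deriv_emb (N : ℤ) (h : PowerSeries k) :
    LaurentSeries.derivative k (emb N h * single 1 1) = - emb N (A N h) := by
  ext j
  rw [deriv_coeff, coeff_mul_single, coeff_neg, emb_coeff, emb_coeff, add_sub_cancel_right]
  split_ifs with hj
  · obtain ⟨n, hn⟩ := Int.eq_ofNat_of_zero_le (sub_nonneg.2 hj)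
    obtain rfl : j = N + n := by omega
    simp [A]
    ring
  · simp

theorem triangular (c : ℕ → ℕ → k) (hc : ∀ m, c m m ≠ 0) (g : ℕ → k) :
    ∃ f : ℕ → k, ∀ m, ∑ l ∈ Finset.range (m + 1), c m l * f l = g m := by
  let f : ℕ → k := fun m => Nat.strongRecOn (motive := fun _ => k) m fun m ih =>
    (g m - ∑ l : Fin m, c m l * ih l l.2) / c m m
  have hf : ∀ m, f m = (g m - ∑ l : Fin m, c m l * f l) / c m m := by
    intro m
    simp only [f]
    rw [Nat.strongRecOn_eq]
  refine ⟨f, fun m => ?_⟩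
  rw [Finset.sum_range_succ, hf m, Finset.sum_range, mul_div_cancel₀ _ (hc m)]
  ring

theorem res_nondeg (g : LaurentSeries k)
    (h : ∀ f : LaurentSeries k, (f * g).coeff (-1) = 0) : g = 0 := by
  ext j
  have := h (single (-1 - j) 1)
  rw [coeff_single_mul] at this
  simpa using this

theorem represent (ψ : LaurentSeries k →ₗ[k] k) (N : ℤ) (hψ : ∀ h, ψ (emb N h) = 0) :
    ∃ g : LaurentSeries k, ∀ f, ψ f = (f * g).coeff (-1) := by
  have hψ' : ∀ f : LaurentSeries k, (∀ j < N, f.coeff j = 0) → ψ f = 0 := by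
    intro f hf
    rw [eq_emb N f hf, hψ]
  let g : LaurentSeries k := ofSuppBddBelow (fun j => ψ (single (-1 - j) 1)) <| by
    refine ⟨-1 - N, fun j hj => ?_⟩
    by_contra hlt
    refine hj (hψ' _ fun i hi => ?_)
    rw [coeff_single_of_ne]
    omega
  have hg : ∀ j, g.coeff j = ψ (single (-1 - j) 1) := fun j => rfl
  refine ⟨g, ?_⟩
  have key : ∀ (n : ℕ) (f : LaurentSeries k), (∀ j < N - n, f.coeff j = 0) →
      ψ f = (f * g).coeff (-1) := by
    intro n
    induction n with
    | zero =>
      intro f hf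
      rw [hψ' f (by simpa using hf), coeff_mul]
      symm
      refine Finset.sum_eq_zero fun x hx => ?_
      rw [Finset.mem_addAntidiagonal] at hx
      obtain ⟨h1, h2, h3⟩ := hx
      exfalso
      have h4 : N ≤ x.1 := by
        by_contra hlt
        exact h1 (hf _ (by simpa using hlt))
      refine h2 ?_
      rw [hg]
      refine hψ' _ fun i hi => ?_
      rw [coeff_single_of_ne]
      omega
    | succ n ih =>
      intro f hf
      set a := N - (n + 1 : ℕ) with ha
      have h1 := ih (f - single a (f.coeff a)) (by
        intro j hj
        rw [coeff_sub]
        by_cases hja : j = a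
        · simp [hja]
        · rw [coeff_single_of_ne hja, hf j (by push_cast at ha; omega), sub_zero])
      have h2 : ψ (single a (f.coeff a)) = (single a (f.coeff a) * g).coeff (-1) := by
        rw [coeff_single_mul, hg]
        have : (single a (f.coeff a) : LaurentSeries k) = f.coeff a • single a (1 : k) := by
          ext; simp [coeff_single]
        rw [this, map_smul, smul_eq_mul]
        congr 3
        simp
      rw [map_sub, sub_mul, coeff_sub, h2] at h1
      exact sub_left_injective h1
  intro f
  refine key (N - f.order).toNat f fun j hj => coeff_eq_zero_of_lt_order (by omega)

variable [CharZero k] {E : Type v} [AddCommGroup E] [Module (LaurentSeries k) E]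

/-- The scalar operator is surjective onto `t^N k[[t]]`. -/
theorem scalar_surj {n : ℕ} (p : Fin n → PowerSeries k)
    (hp : ∃ i, PowerSeries.coeff 0 (p i) ≠ 0) :
    ∃ N : ℤ, ∀ G : PowerSeries k, ∃ F : PowerSeries k,
      ∑ i : Fin n, (A N)^[i] (p i * F) = G := by
  let q : Polynomial k := ∑ i : Fin n, Polynomial.monomial (i : ℕ) (PowerSeries.coeff 0 (p i))
  have hq : q ≠ 0 := by
    obtain ⟨i, hi⟩ := hp
    intro h0
    apply hi
    have := congrArg (fun r => Polynomial.coeff r i) h0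
    simpa [q, Polynomial.finsetSum_coeff, Polynomial.coeff_monomial, Fin.val_inj] using this
  have hfin : (q.rootSet k).Finite := Polynomial.rootSet_finite q k
  have hinj : Function.Injective (fun m : ℕ => -((m : k) + 1)) := by
    intro a b hab
    simpa using hab
  have hpre := hfin.preimage (hinj.injOn)
  obtain ⟨N, hN⟩ := hpre.bddAbove
  refine ⟨(N + 1 : ℕ), fun G => ?_⟩
  have hne : ∀ m : ℕ, q.eval (-((((N + 1 : ℕ) : ℤ) : k) + m + 1)) ≠ 0 := by
    intro m h0
    have : (N + 1 + m) ∈ (fun m : ℕ => -((m : k) + 1)) ⁻¹' (q.rootSet k) := by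
      rw [Set.mem_preimage, Polynomial.mem_rootSet]
      refine ⟨hq, ?_⟩
      rw [← h0]
      simp
    have := hN this
    omega
  obtain ⟨f, hf⟩ := triangular (fun m l => ∑ i : Fin n,
    (-((((N + 1 : ℕ) : ℤ) : k) + m + 1)) ^ (i : ℕ) * PowerSeries.coeff (m - l) (p i))
    (by
      intro m
      have := hne m
      simp only [q, Polynomial.eval_finsetSum, Polynomial.eval_monomial] at this
      simp only [Nat.sub_self]
      simpa only [mul_comm] using this) (fun m => PowerSeries.coeff m G)
  refine ⟨PowerSeries.mk f, ?_⟩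
  ext m
  rw [← hf m, map_sum]
  simp only [A_iter_coeff, Finset.sum_mul]
  rw [Finset.sum_comm]
  refine Finset.sum_congr rfl fun i _ => ?_
  rw [mul_comm (p i), PowerSeries.coeff_mul, Finset.Nat.sum_antidiagonal_eq_sum_range_succ_mk,
    Finset.mul_sum]
  refine Finset.sum_congr rfl fun l _ => ?_
  simp
  ring

theorem exists_rel [FiniteDimensional (LaurentSeries k) E] (w : ℕ → E) :
    ∃ (n : ℕ) (p : Fin n → PowerSeries k), (∃ i, PowerSeries.coeff 0 (p i) ≠ 0) ∧
      ∑ i, (ofPowerSeries ℤ k (p i)) • w i = 0 := by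
  classical
  let n := Module.finrank (LaurentSeries k) E + 1
  have hdep : ¬ LinearIndependent (LaurentSeries k) (fun i : Fin n => w i) := by
    intro h
    have := h.fintype_card_le_finrank
    simp [n] at this
  rw [Fintype.not_linearIndependent_iff] at hdep
  obtain ⟨b, hb, i0, hi0⟩ := hdep
  obtain ⟨i, hi, hmin⟩ := Finset.exists_min_image (Finset.univ.filter fun i => b i ≠ 0)
    (fun i => (b i).order) ⟨i0, by simpa using hi0⟩
  set d := (b i).order with hd
  have hbi : b i ≠ 0 := by simpa using hi
  have hE : ∀ j, b j = emb d (PowerSeries.mk fun m => (b j).coeff (d + m)) := by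
    intro j
    apply eq_emb
    intro l hl
    by_cases hj : b j = 0
    · simp [hj]
    · exact coeff_eq_zero_of_lt_order (hl.trans_le (hmin j (by simpa using hj)))
  refine ⟨n, fun j => PowerSeries.mk fun m => (b j).coeff (d + m), ⟨i, ?_⟩, ?_⟩
  · simpa [hd] using coeff_order_eq_zero.not.2 hbi
  · have h1 : (single d (1 : k) : LaurentSeries k) • ∑ j : Fin n,
        (ofPowerSeries ℤ k (PowerSeries.mk fun m => (b j).coeff (d + m))) • w j = 0 := by
      rw [Finset.smul_sum, ← hb]
      refine Finset.sum_congr rfl fun j _ => ?_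
      conv_rhs => rw [hE j]
      rw [emb, mul_smul]
    refine (smul_eq_zero.1 h1).resolve_left ?_
    simp

theorem continuous_functional [FiniteDimensional (LaurentSeries k) E]
    [Module k E] [IsScalarTower k (LaurentSeries k) E]
    (D : E →ₗ[k] E)
    (leibniz : ∀ (f : LaurentSeries k) (e : E),
      D (f • e) = LaurentSeries.derivative k f • e + f • D e)
    (φ : E →ₗ[k] k) (hφ : ∀ e, φ (D e) = 0) (v : E) :
    ∃ N : ℤ, ∀ h : PowerSeries k, φ (emb N h • v) = 0 := by
  let θ : E → E := fun w => (single (1 : ℤ) (1 : k) : LaurentSeries k) • D w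
  have hθ : ∀ (N : ℤ) (h : PowerSeries k) w, φ (emb N h • θ w) = φ (emb N (A N h) • w) := by
    intro N h w
    have h1 := hφ ((emb N h * single 1 1) • w)
    rw [leibniz, deriv_emb, map_add, neg_smul, map_neg, mul_smul] at h1
    exact (neg_add_eq_zero.1 h1).symm
  have hθi : ∀ (N : ℤ) (h : PowerSeries k) (i : ℕ) w, φ (emb N h • θ^[i] w) = φ (emb N ((A N)^[i] h) • w) := by
    intro N h i
    induction i with
    | zero => intro w; rfl
    | succ i ih =>
      intro w
      rw [Function.iterate_succ_apply, ih, hθ, Function.iterate_succ_apply']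
  obtain ⟨n, p, hp, hrel⟩ := exists_rel (k := k) (fun i => θ^[i] v)
  obtain ⟨N, hN⟩ := scalar_surj p hp
  refine ⟨N, fun G => ?_⟩
  obtain ⟨F, rfl⟩ := hN G
  have hsum : emb N (∑ i : Fin n, (A N)^[i] (p i * F)) • v =
      ∑ i : Fin n, emb N ((A N)^[i] (p i * F)) • v := by
    simp only [emb, map_sum, Finset.mul_sum, Finset.sum_smul]
  rw [hsum, map_sum]
  simp only [← hθi]
  rw [← map_sum]
  have h2 : ∑ i : Fin n, emb N (p i * F) • θ^[i] v = emb N F • ∑ i : Fin n,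
      (ofPowerSeries ℤ k (p i)) • θ^[i] v := by
    rw [Finset.smul_sum]
    refine Finset.sum_congr rfl fun i _ => ?_
    rw [smul_smul, emb, emb, map_mul]
    congr 1
    ring
  rw [h2, hrel, smul_zero, map_zero]

theorem exists_dual [FiniteDimensional (LaurentSeries k) E]
    [Module k E] [IsScalarTower k (LaurentSeries k) E]
    (D : E →ₗ[k] E)
    (leibniz : ∀ (f : LaurentSeries k) (e : E),
      D (f • e) = LaurentSeries.derivative k f • e + f • D e)
    (φ : E →ₗ[k] k) (hφ : ∀ e, φ (D e) = 0) :
    ∃ t : Module.Dual (LaurentSeries k) E, ∀ s, φ s = (t s).coeff (-1) := by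
  have h : ∀ v : E, ∃ g : LaurentSeries k, ∀ f : LaurentSeries k,
      φ (f • v) = (f * g).coeff (-1) := by
    intro v
    obtain ⟨N, hN⟩ := continuous_functional D leibniz φ hφ v
    exact represent (φ.comp ((LinearMap.toSpanSingleton (LaurentSeries k) E v).restrictScalars k))
      N hN
  choose g hg using h
  have hext : ∀ a b : LaurentSeries k,
      (∀ f : LaurentSeries k, (f * a).coeff (-1) = (f * b).coeff (-1)) → a = b := by
    intro a b hab
    refine sub_eq_zero.1 (res_nondeg _ fun f => ?_)
    rw [mul_sub, coeff_sub, hab, sub_self]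
  refine ⟨{ toFun := g, map_add' := ?_, map_smul' := ?_ }, ?_⟩
  · intro x y
    refine hext _ _ fun f => ?_
    rw [← hg, smul_add, map_add, hg, hg, mul_add, coeff_add]
  · intro c x
    refine hext _ _ fun f => ?_
    rw [← hg, smul_smul, hg, RingHom.id_apply, smul_eq_mul, mul_assoc]
  · intro s
    have := hg s 1
    simpa using this

theorem deriv_eq_zero (f : LaurentSeries k) (hf : LaurentSeries.derivative k f = 0) :
    f = single 0 (f.coeff 0) := by
  ext j
  by_cases hj : j = 0
  · simp [hj]
  · rw [coeff_single_of_ne hj]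
    have := congrArg (fun r : LaurentSeries k => r.coeff (j - 1)) hf
    simp only [deriv_coeff, coeff_zero, sub_add_cancel, mul_eq_zero] at this
    refine this.resolve_left ?_
    push_cast
    simpa using hj

theorem horizontal_indep {M : Type v} [AddCommGroup M] [Module (LaurentSeries k) M]
    [Module k M] (hsc : ∀ (c : k) (x : M), (single 0 c : LaurentSeries k) • x = c • x)
    (D : M →ₗ[k] M)
    (leibniz : ∀ (f : LaurentSeries k) (e : M),
      D (f • e) = LaurentSeries.derivative k f • e + f • D e) {n : ℕ} (v : Fin n → M)
    (hv : ∀ i, D (v i) = 0) (hi : LinearIndependent k v) :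
    LinearIndependent (LaurentSeries k) v := by
  induction n with
  | zero => exact linearIndependent_empty_type
  | succ n ih =>
    rw [linearIndependent_finSucc] at hi ⊢
    have h1 := ih (Fin.tail v) (fun i => hv _) hi.1
    refine ⟨h1, fun hmem => hi.2 ?_⟩
    obtain ⟨c, hc⟩ := (Submodule.mem_span_range_iff_exists_fun _).1 hmem
    have h2 : ∑ i, LaurentSeries.derivative k (c i) • Fin.tail v i = 0 := by
      have h3 := congrArg D hc
      rw [hv, map_sum] at h3
      rw [← h3]
      refine Finset.sum_congr rfl fun i _ => ?_
      rw [leibniz, show D (Fin.tail v i) = 0 from hv _, smul_zero, add_zero]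
    have h3 := Fintype.linearIndependent_iff.1 h1 _ h2
    refine (Submodule.mem_span_range_iff_exists_fun _).2 ⟨fun i => (c i).coeff 0, ?_⟩
    rw [← hc]
    refine Finset.sum_congr rfl fun i _ => ?_
    conv_rhs => rw [deriv_eq_zero _ (h3 i)]
    rw [hsc]

theorem horizontal_finite {M : Type v} [AddCommGroup M] [Module (LaurentSeries k) M]
    [FiniteDimensional (LaurentSeries k) M]
    [Module k M] (hsc : ∀ (c : k) (x : M), (single 0 c : LaurentSeries k) • x = c • x)
    (D : M →ₗ[k] M)
    (leibniz : ∀ (f : LaurentSeries k) (e : M),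
      D (f • e) = LaurentSeries.derivative k f • e + f • D e) :
    Module.Finite k ↥(LinearMap.ker D) := by
  have hr : Module.rank k ↥(LinearMap.ker D) ≤
      (Module.finrank (LaurentSeries k) (M) : ℕ) := by
    refine rank_le fun s hs => ?_
    let w : Fin s.card → M :=
      fun i => ((s.equivFin.symm i : ↥(LinearMap.ker D)) : M)
    have h0 : LinearIndependent k (fun i => (s.equivFin.symm i : ↥(LinearMap.ker D))) :=
      hs.comp _ s.equivFin.symm.injective
    have h1 : LinearIndependent k w :=
      h0.map' (LinearMap.ker D).subtype (Submodule.ker_subtype _)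
    have hw : ∀ i, D (w i) = 0 := fun i =>
      LinearMap.mem_ker.1 (s.equivFin.symm i : ↥(LinearMap.ker D)).2
    have h2 := horizontal_indep hsc D leibniz w hw h1
    simpa using h2.fintype_card_le_finrank
  exact Module.rank_lt_aleph0_iff.1 (hr.trans_lt (Cardinal.natCast_lt_aleph0))

end KerDual

/-- Let `(E, ∇)` be a flat connection on `F₁ = k((t))` (char k = 0) and `∇^∨`
the dual connection on `E^∨ = Hom_{F₁}(E, F₁)`, characterized by
`⟨s,t⟩' = ⟨∇s, t⟩ + ⟨s, ∇^∨ t⟩`.  Under the residue pairing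
`Res(f) = coefficient of t⁻¹ in f` (identifying the topological `k`-dual of `E` with
`E^∨ ⊗ Ω¹`), the kernel of `∇^∨` maps isomorphically onto the `k`-dual of `coker ∇`;
in particular `dim_k coker(∇) = dim_k ker(∇^∨)`. -/
theorem ker_dual_connection_dual_to_coker
    (k : Type u) [Field k] [CharZero k]
    (E : Type v) [AddCommGroup E] [Module (LaurentSeries k) E]
    [FiniteDimensional (LaurentSeries k) E]
    [Module k E] [IsScalarTower k (LaurentSeries k) E]
    [SMulCommClass (LaurentSeries k) k (LaurentSeries k)]
    (D : E →ₗ[k] E)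
    (leibniz : ∀ (f : LaurentSeries k) (e : E),
      D (f • e) = LaurentSeries.derivative k f • e + f • D e)
    (Dd : Module.Dual (LaurentSeries k) E →ₗ[k] Module.Dual (LaurentSeries k) E)
    (dual_rule : ∀ (t : Module.Dual (LaurentSeries k) E) (s : E),
      LaurentSeries.derivative k (t s) = t (D s) + (Dd t) s) :
    ∃ Φ : ↥(LinearMap.ker Dd) ≃ₗ[k] Module.Dual k (E ⧸ LinearMap.range D),
      (∀ (t : ↥(LinearMap.ker Dd)) (s : E),
        Φ t (Submodule.Quotient.mk s) =
          ((t : Module.Dual (LaurentSeries k) E) s).coeff (-1)) ∧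
      Cardinal.lift.{max u v} (Module.rank k (E ⧸ LinearMap.range D)) =
        Cardinal.lift.{v} (Module.rank k ↥(LinearMap.ker Dd)) := by
  have hnd : ∀ t : Module.Dual (LaurentSeries k) E, (∀ s, (t s).coeff (-1) = 0) → t = 0 := by
    intro t ht
    ext1 s
    refine KerDual.res_nondeg _ fun f => ?_
    rw [← smul_eq_mul, ← map_smul]
    exact ht _
  have hres : ∀ f : LaurentSeries k, (LaurentSeries.derivative k f).coeff (-1) = 0 := by
    intro f
    rw [KerDual.deriv_coeff]
    simp
  let Ψ : ↥(LinearMap.ker Dd) →ₗ[k] Module.Dual k (E ⧸ LinearMap.range D) :=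
    { toFun := fun t => (LinearMap.range D).liftQ
        { toFun := fun s => ((t : Module.Dual (LaurentSeries k) E) s).coeff (-1)
          map_add' := fun x y => by rw [map_add, HahnSeries.coeff_add]
          map_smul' := fun c x => by
            rw [← smul_one_smul (LaurentSeries k) c x, map_smul, KerDual.smul_one_eq, smul_eq_mul,
              HahnSeries.coeff_single_zero_mul, RingHom.id_apply, smul_eq_mul] }
        (by
          rintro _ ⟨s, rfl⟩
          rw [LinearMap.mem_ker]
          have h1 := dual_rule t s
          rw [LinearMap.mem_ker.1 t.2, LinearMap.zero_apply, add_zero] at h1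
          change ((t : Module.Dual (LaurentSeries k) E) (D s)).coeff (-1) = 0
          rw [← h1, hres])
      map_add' := fun t t' => by
        ext s
        rfl
      map_smul' := fun c t => by
        ext s
        rfl }
  have hΨ : ∀ (t : ↥(LinearMap.ker Dd)) (s : E), Ψ t (Submodule.Quotient.mk s) =
      ((t : Module.Dual (LaurentSeries k) E) s).coeff (-1) := fun t s => rfl
  have hbij : Function.Bijective Ψ := by
    constructor
    · rw [injective_iff_map_eq_zero]
      intro t ht
      apply Subtype.ext
      refine hnd _ fun s => ?_
      rw [← hΨ, ht, LinearMap.zero_apply]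
    · intro φ
      obtain ⟨t, ht⟩ := KerDual.exists_dual D leibniz (φ.comp (LinearMap.range D).mkQ) (by
        intro e
        rw [LinearMap.comp_apply, Submodule.mkQ_apply,
          (Submodule.Quotient.mk_eq_zero _).2 (LinearMap.mem_range_self D e), map_zero])
      have hker : t ∈ LinearMap.ker Dd := by
        rw [LinearMap.mem_ker]
        refine hnd _ fun s => ?_
        have h1 := congrArg (fun r : LaurentSeries k => r.coeff (-1)) (dual_rule t s)
        simp only [hres, HahnSeries.coeff_add] at h1
        rw [← ht, LinearMap.comp_apply, Submodule.mkQ_apply,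
          (Submodule.Quotient.mk_eq_zero _).2 (LinearMap.mem_range_self D s), map_zero,
          zero_add] at h1
        exact h1.symm
      refine ⟨⟨t, hker⟩, ?_⟩
      ext s
      exact (ht s).symm
  let Φ := LinearEquiv.ofBijective Ψ hbij
  refine ⟨Φ, hΨ, ?_⟩
  have hDd : ∀ (f : LaurentSeries k) (t : Module.Dual (LaurentSeries k) E),
      Dd (f • t) = LaurentSeries.derivative k f • t + f • Dd t := by
    intro f t
    ext1 s
    have h1 := dual_rule t (f • s)
    have h2 := dual_rule (f • t) s
    rw [LinearMap.smul_apply, LinearMap.smul_apply, ← map_smul, h1, leibniz, map_add, map_smul,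
      map_smul, map_smul] at h2
    rw [LinearMap.add_apply, LinearMap.smul_apply, LinearMap.smul_apply]
    linear_combination -h2
  have hsc : ∀ (c : k) (x : Module.Dual (LaurentSeries k) E),
      (HahnSeries.single 0 c : LaurentSeries k) • x = c • x := by
    intro c x
    ext1 s
    rw [LinearMap.smul_apply, LinearMap.smul_apply]
    ext j
    rw [smul_eq_mul, HahnSeries.coeff_single_zero_mul, HahnSeries.coeff_smul, smul_eq_mul]
  have hfin : Module.Finite k ↥(LinearMap.ker Dd) := KerDual.horizontal_finite hsc Dd hDd
  have hfd : Module.Finite k (Module.Dual k (E ⧸ LinearMap.range D)) := Module.Finite.equiv Φ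
  have hfc : Module.Finite k (E ⧸ LinearMap.range D) := (Module.finite_dual_iff k).1 hfd
  rw [← Module.finrank_eq_rank, ← Module.finrank_eq_rank, Φ.finrank_eq, Subspace.dual_finrank_eq]
  simp
end

section
/- Let (E, ∇) be a flat connection on the n-dimensional local field F_n = k((t₁))...((t_n)), char k = 0. Then for every i, the de Rham cohomology group H^i_∇(E) of the complex E → E ⊗ Ω¹ → ... → E ⊗ Ω^n is a finite-dimensional k-vector space. -/
universe u v

/-- Coefficientwise extension of a zero-preserving map `F → F` to Laurent series `F((t))`. -/
noncomputable def coeffExt {F : Type u} [Zero F] (d : F → F) (hd : d 0 = 0)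
    (y : LaurentSeries F) : LaurentSeries F where
  coeff g := d (y.coeff g)
  isPWO_support' := y.isPWO_support'.mono (fun g hg => by
    simp only [Function.mem_support] at hg ⊢
    intro h
    exact hg (by rw [h, hd]))

/-- The tower of iterated Laurent series fields `F₀ = k`, `F_{n+1} = F_n((t))`, bundled with
its field structure, its `k`-algebra structure, the `n` partial derivatives
`∂/∂t₁, …, ∂/∂t_n` (the last one is the Laurent-series derivative in the outermost variable,
the others are extended coefficientwise), and the iterated residue map (the coefficient of
`t₁⁻¹⋯t_n⁻¹`). -/
noncomputable def FnPkg (k : Type u) [Field k] :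
    (n : ℕ) → Σ' (T : Type u) (_ : Field T) (_ : Algebra k T),
      (Fin n → {f : T → T // f 0 = 0}) × (T → k)
  | 0 => ⟨k, inferInstance, Algebra.id k, Fin.elim0, id⟩
  | n + 1 =>
    let p := FnPkg k n
    letI := p.2.1
    letI := p.2.2.1
    ⟨LaurentSeries p.1, inferInstance, inferInstance,
      fun i => Fin.lastCases
        ⟨fun y => LaurentSeries.derivative p.1 (V := p.1) y, map_zero _⟩
        (fun j => ⟨coeffExt (p.2.2.2.1 j).1 (p.2.2.2.1 j).2, by
          ext g
          exact (p.2.2.2.1 j).2⟩) i,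
      fun y => p.2.2.2.2 (y.coeff (-1))⟩

/-- The `n`-fold iterated Laurent series field `F_n = k((t₁))⋯((t_n))`. -/
noncomputable def Fn (k : Type u) [Field k] (n : ℕ) : Type u := (FnPkg k n).1

noncomputable instance Fn.instField (k : Type u) [Field k] (n : ℕ) : Field (Fn k n) :=
  (FnPkg k n).2.1

noncomputable instance Fn.instAlgebra (k : Type u) [Field k] (n : ℕ) : Algebra k (Fn k n) :=
  (FnPkg k n).2.2.1

/-- The partial derivative `∂/∂tᵢ` on `F_n = k((t₁))⋯((t_n))`. -/
noncomputable def pder (k : Type u) [Field k] (n : ℕ) (i : Fin n) : Fn k n → Fn k n :=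
  ((FnPkg k n).2.2.2.1 i).1

/-- The iterated residue `Res : F_n → k`, the coefficient of `t₁⁻¹⋯t_n⁻¹`. -/
noncomputable def resFn (k : Type u) [Field k] (n : ℕ) : Fn k n → k :=
  (FnPkg k n).2.2.2.2

/-- The degree-`p` piece of the formal de Rham complex of a flat connection
`(E, (∇₁, …, ∇_n))` on `F_n`: `E ⊗ Ω^p` is identified with functions from the set of
`p`-element subsets of `{1, …, n}` (indexing the basis `dt_{i₁} ∧ ⋯ ∧ dt_{i_p}`) to `E`. -/
abbrev deRhamPiece (n : ℕ) (E : Type v) (p : ℕ) : Type v :=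
  {M : Finset (Fin n) // M.card = p} → E

/-- The de Rham differential `E ⊗ Ω^p → E ⊗ Ω^{p+1}` of the connection `(∇₁, …, ∇_n)`,
with the usual alternating signs. -/
noncomputable def deRhamD (k : Type u) [Field k] (n : ℕ) (E : Type v) [AddCommGroup E]
    [Module k E] (Dop : Fin n → (E →ₗ[k] E)) (p : ℕ) :
    deRhamPiece n E p →ₗ[k] deRhamPiece n E (p + 1) where
  toFun φ N := ∑ i ∈ N.1.attach,
    ((-1 : ℤ) ^ (N.1.filter (fun j => j < i.1)).card) •
      Dop i.1 (φ ⟨N.1.erase i.1, by simp [Finset.card_erase_of_mem i.2, N.2]⟩)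
  map_add' φ ψ := by
    funext N
    simp only [Pi.add_apply, map_add, smul_add]
    exact Finset.sum_add_distrib
  map_smul' r φ := by
    funext N
    simp only [RingHom.id_apply, Pi.smul_apply, map_smul]
    rw [Finset.smul_sum]
    exact Finset.sum_congr rfl fun i _ => (smul_comm _ _ _)


section Analytic
open Polynomial

theorem aux_mul_low {F : Type u} [Field F] (x y : LaurentSeries F) (a b : ℤ)
    (hx : ∀ m < a, x.coeff m = 0) (hy : ∀ m < b, y.coeff m = 0) :
    (∀ m < a + b, (x * y).coeff m = 0) ∧
      (x * y).coeff (a + b) = x.coeff a * y.coeff b := by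
  constructor
  · intro m hm
    rw [HahnSeries.coeff_mul]
    refine Finset.sum_eq_zero ?_
    rintro ⟨i, j⟩ hij
    rw [Finset.mem_antidiagonal] at hij
    obtain ⟨h1, h2, h3⟩ := hij
    by_cases hi : i < a
    · simp [hx i hi]
    · have hj : j < b := by simp only at h3; omega
      simp [hy j hj]
  · rw [HahnSeries.coeff_mul]
    rw [Finset.sum_eq_single (a, b)]
    · rintro ⟨i, j⟩ hij hne
      rw [Finset.mem_antidiagonal] at hij
      obtain ⟨h1, h2, h3⟩ := hij
      by_cases hi : i < a
      · simp [hx i hi]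
      · by_cases hj : j < b
        · simp [hy j hj]
        · exfalso
          apply hne
          simp only at h3
          ext <;> simp only <;> omega
    · intro h
      rw [Finset.mem_antidiagonal] at h
      by_contra h'
      apply h
      refine ⟨?_, ?_, rfl⟩
      · intro h0; apply h'; simp only at h0 ⊢; rw [h0, zero_mul]
      · intro h0; apply h'; simp only at h0 ⊢; rw [h0, mul_zero]

theorem aux_deriv_coeff {F : Type u} [Field F] (y : LaurentSeries F) (m : ℤ) :
    (LaurentSeries.derivative F y).coeff m = ((m : F) + 1) * y.coeff (m + 1) := by
  rw [LaurentSeries.derivative_apply, LaurentSeries.hasseDeriv_coeff]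
  simp

theorem aux_deriv_iter_coeff {F : Type u} [Field F] (i : ℕ) :
    ∀ (y : LaurentSeries F) (m : ℤ),
    (((LaurentSeries.derivative F (V := F)) ^ i) y).coeff m =
      (ascPochhammer F i).eval ((m : F) + 1) * y.coeff (m + i) := by
  induction i with
  | zero => intro y m; simp
  | succ i ih =>
    intro y m
    rw [pow_succ', Module.End.mul_apply, aux_deriv_coeff, ih, ascPochhammer_succ_left]
    simp only [eval_mul, eval_X, eval_comp, eval_add, eval_one]
    push_cast
    rw [show m + 1 + (i : ℤ) = m + (i + 1) by ring]
    ring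

/-- Successive approximation. -/
theorem aux_coker_finite {F : Type u} [Field F]
    (T : LaurentSeries F →ₗ[F] LaurentSeries F) (c : ℤ) (q : ℤ → F)
    (hT : ∀ (y : LaurentSeries F) (n : ℤ), (∀ m < n, y.coeff m = 0) →
      (∀ m < n + c, (T y).coeff m = 0) ∧ (T y).coeff (n + c) = q n * y.coeff n)
    (hq : {n | q n = 0}.Finite) :
    ∃ V : Submodule F (LaurentSeries F), V.FG ∧ ∀ z, ∃ y, ∃ v ∈ V, z = T y + v := by
  obtain ⟨N, hN⟩ : ∃ N : ℤ, ∀ n, N ≤ n → q n ≠ 0 := by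
    obtain ⟨B, hB⟩ := hq.bddAbove
    refine ⟨B + 1, fun n hn h0 => ?_⟩
    have := hB (show n ∈ {n | q n = 0} from h0)
    omega
  -- high order elements are in the range
  have high : ∀ z : LaurentSeries F, (∀ m < N + c, z.coeff m = 0) → ∃ y, T y = z := by
    intro z hz
    let Y : ℕ → LaurentSeries F := fun j => Nat.rec 0 (fun j y =>
      y + HahnSeries.single (N + j) ((z - T y).coeff (N + j + c) / q (N + j))) j
    have Ysucc : ∀ j, Y (j + 1) = Y j +
      HahnSeries.single (N + j) ((z - T (Y j)).coeff (N + j + c) / q (N + j)) := fun j => rfl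
    have hY : ∀ j : ℕ, ∀ m < N + j + c, (z - T (Y j)).coeff m = 0 := by
      intro j
      induction j with
      | zero => intro m hm; simpa [Y] using hz m (by simpa using hm)
      | succ j ih =>
        intro m hm
        have hs := hT (HahnSeries.single (N + j) ((z - T (Y j)).coeff (N + j + c) / q (N + j)))
          (N + j) (fun m hm => HahnSeries.coeff_single_of_ne (by omega))
        rw [Ysucc, map_add, ← sub_sub, HahnSeries.coeff_sub]
        by_cases hm' : m < N + j + c
        · rw [ih m hm', hs.1 m hm', sub_zero]
        · have : m = N + j + c := by push_cast at hm; omega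
          subst this
          rw [hs.2, HahnSeries.coeff_single_same, mul_div_cancel₀ _ (hN _ (by omega)), sub_self]
    -- coefficients stabilize
    have hlow : ∀ j : ℕ, ∀ m < N, (Y j).coeff m = 0 := by
      intro j
      induction j with
      | zero => intro m hm; simp [Y]
      | succ j ih =>
        intro m hm
        rw [Ysucc, HahnSeries.coeff_add, ih m hm, HahnSeries.coeff_single_of_ne (by omega), add_zero]
    have hstab : ∀ (d j : ℕ), ∀ m < N + j, (Y (j + d)).coeff m = (Y j).coeff m := by
      intro d j m hm
      induction d with
      | zero => rfl
      | succ d ih =>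
        rw [← add_assoc, Ysucc, HahnSeries.coeff_add, ih,
          HahnSeries.coeff_single_of_ne (by push_cast; omega), add_zero]
    let g : ℤ → F := fun m => (Y ((m - N).toNat + 1)).coeff m
    have hg : ∀ m < N, g m = 0 := fun m hm => hlow ((m - N).toNat + 1) m hm
    let y : LaurentSeries F := HahnSeries.ofSuppBddBelow g
      ⟨N, fun m hm => not_lt.mp fun h => hm (hg m h)⟩
    have hyc : ∀ j : ℕ, ∀ m < N + j, (y - Y j).coeff m = 0 := by
      intro j m hm
      rw [HahnSeries.coeff_sub]
      change g m - _ = 0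
      by_cases hm' : m < N
      · rw [hg m hm', hlow j m hm', sub_zero]
      · obtain ⟨d, hd⟩ : ∃ d, j = ((m - N).toNat + 1) + d := ⟨j - ((m - N).toNat + 1), by omega⟩
        rw [hd, hstab d _ m (by push_cast; omega), sub_self]
    refine ⟨y, ?_⟩
    ext m
    obtain ⟨j, hj⟩ : ∃ j : ℕ, m < N + j + c := ⟨(m - N - c).toNat + 1, by push_cast; omega⟩
    have h1 := hY j m hj
    have h2 := (hT _ _ (hyc j)).1 m hj
    rw [map_sub, HahnSeries.coeff_sub] at h2
    rw [HahnSeries.coeff_sub] at h1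
    rw [sub_eq_zero] at h1 h2
    rw [h2, h1]
  let V : Submodule F (LaurentSeries F) :=
    Submodule.span F ((fun n : ℤ => HahnSeries.single (n + c) (1 : F)) '' {n | q n = 0})
  refine ⟨V, Submodule.fg_span (hq.image _), ?_⟩
  have low : ∀ (d : ℕ) (z : LaurentSeries F), (∀ m < N - d + c, z.coeff m = 0) →
      ∃ y, ∃ v ∈ V, z = T y + v := by
    intro d
    induction d with
    | zero =>
      intro z hz
      obtain ⟨y, hy⟩ := high z (by simpa using hz)
      exact ⟨y, 0, V.zero_mem, by simp [hy]⟩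
    | succ d ih =>
      intro z hz
      set n : ℤ := N - (d + 1 : ℕ) with hn
      by_cases h0 : q n = 0
      · have hmem : z.coeff (n + c) • HahnSeries.single (n + c) (1 : F) ∈ V :=
          V.smul_mem _ (Submodule.subset_span ⟨n, h0, rfl⟩)
        obtain ⟨y, v, hv, h⟩ := ih (z - z.coeff (n + c) • HahnSeries.single (n + c) (1 : F)) (by
          intro m hm
          rw [HahnSeries.coeff_sub, HahnSeries.coeff_smul]
          by_cases hm' : m < n + c
          · rw [hz m hm', HahnSeries.coeff_single_of_ne (by omega)]; simp
          · have : m = n + c := by push_cast at hn; omega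
            subst this
            simp)
        exact ⟨y, v + _, V.add_mem hv hmem, by rw [← add_assoc, ← h, sub_add_cancel]⟩
      · have hs := hT (HahnSeries.single n (z.coeff (n + c) / q n)) n
          (fun m hm => HahnSeries.coeff_single_of_ne (by omega))
        obtain ⟨y, v, hv, h⟩ := ih (z - T (HahnSeries.single n (z.coeff (n + c) / q n))) (by
          intro m hm
          rw [HahnSeries.coeff_sub]
          by_cases hm' : m < n + c
          · rw [hz m hm', hs.1 m hm', sub_zero]
          · have : m = n + c := by push_cast at hn; omega
            subst this
            rw [hs.2, HahnSeries.coeff_single_same, mul_div_cancel₀ _ h0, sub_self])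
        refine ⟨y + HahnSeries.single n (z.coeff (n + c) / q n), v, hv, ?_⟩
        rw [map_add, add_right_comm, ← h, sub_add_cancel]
  intro z
  refine low (N + c - z.order).toNat z (fun m hm => ?_)
  exact HahnSeries.coeff_eq_zero_of_lt_order (by omega)

/-- Multiplication as an `F`-linear map. -/
noncomputable def auxMul {F : Type u} [Field F] (b : LaurentSeries F) :
    LaurentSeries F →ₗ[F] LaurentSeries F where
  toFun y := b * y
  map_add' x y := mul_add b x y
  map_smul' r y := by
    rw [← HahnSeries.C_mul_eq_smul, RingHom.id_apply, ← HahnSeries.C_mul_eq_smul]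
    ring

/-- The adjoint differential operator has finite-dimensional cokernel. -/
theorem aux_adjoint {F : Type u} [Field F] [CharZero F] (s : Finset ℕ)
    (b : ℕ → LaurentSeries F) (hb : ∃ i ∈ s, b i ≠ 0) :
    ∃ V : Submodule F (LaurentSeries F), V.FG ∧ ∀ z, ∃ y, ∃ v ∈ V,
      z = (∑ i ∈ s, (-1 : F) ^ i • ((LaurentSeries.derivative F (V := F)) ^ i) (b i * y)) + v := by
  classical
  set s' := s.filter (fun i => b i ≠ 0) with hs'
  have hne : s'.Nonempty := by
    obtain ⟨i, hi, h⟩ := hb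
    exact ⟨i, by simp [hs', hi, h]⟩
  obtain ⟨i0, hi0, hmin⟩ := Finset.exists_min_image s' (fun i => (b i).order - (i : ℤ)) hne
  set c : ℤ := (b i0).order - (i0 : ℤ) with hc
  have hlow : ∀ i ∈ s, ∀ m < c + i, (b i).coeff m = 0 := by
    intro i hi m hm
    by_cases h0 : b i = 0
    · simp [h0]
    · have := hmin i (by simp [hs', hi, h0])
      exact HahnSeries.coeff_eq_zero_of_lt_order (by omega)
  let Q : F[X] := ∑ i ∈ s, Polynomial.C ((-1 : F) ^ i * (b i).coeff (c + i)) * ascPochhammer F i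
  have hQ : Q ≠ 0 := by
    set s'' := s.filter (fun i => (b i).coeff (c + i) ≠ 0) with hs''
    have hne2 : s''.Nonempty := by
      refine ⟨i0, ?_⟩
      have h1 : i0 ∈ s ∧ b i0 ≠ 0 := by simpa [hs'] using hi0
      simp only [hs'', Finset.mem_filter]
      refine ⟨h1.1, ?_⟩
      rw [hc, sub_add_cancel]
      exact HahnSeries.coeff_order_eq_zero.not.mpr h1.2
    set M := s''.max' hne2
    have hM : M ∈ s'' := Finset.max'_mem _ _
    have hM' : M ∈ s ∧ (b M).coeff (c + M) ≠ 0 := by simpa [hs''] using hM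
    intro h
    have h2 : Q.coeff M = 0 := by rw [h]; simp
    rw [Polynomial.finsetSum_coeff, Finset.sum_eq_single M] at h2
    · rw [Polynomial.coeff_C_mul] at h2
      have h3 : (ascPochhammer F M).coeff M = 1 := by
        have := (monic_ascPochhammer F M).coeff_natDegree
        rwa [ascPochhammer_natDegree] at this
      rw [h3, mul_one] at h2
      rcases mul_eq_zero.mp h2 with h4 | h4
      · exact absurd h4 (pow_ne_zero _ (by simp))
      · exact hM'.2 h4
    · intro i hi hiM
      rw [Polynomial.coeff_C_mul]
      by_cases h5 : (b i).coeff (c + i) = 0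
      · simp [h5]
      · have : i ≤ M := Finset.le_max' _ _ (by simp [hs'', hi, h5])
        rw [Polynomial.coeff_eq_zero_of_natDegree_lt (by rw [ascPochhammer_natDegree]; omega),
          mul_zero]
    · intro h; exact absurd hM'.1 h
  let T : LaurentSeries F →ₗ[F] LaurentSeries F :=
    ∑ i ∈ s, (-1 : F) ^ i • (((LaurentSeries.derivative F (V := F)) ^ i) ∘ₗ
      auxMul (b i))
  have hTa : ∀ y, T y = ∑ i ∈ s, (-1 : F) ^ i •
      ((LaurentSeries.derivative F (V := F)) ^ i) (b i * y) := by
    intro y; simp [T, LinearMap.sum_apply, auxMul]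
  have := aux_coker_finite T c (fun n => Q.eval (((n + c : ℤ) : F) + 1)) ?_ ?_
  · simpa only [hTa] using this
  · intro y n hy
    have hco : ∀ m, (T y).coeff m = ∑ i ∈ s, (-1 : F) ^ i *
        ((ascPochhammer F i).eval ((m : F) + 1) * (b i * y).coeff (m + i)) := by
      intro m
      rw [hTa, HahnSeries.coeff_sum]
      refine Finset.sum_congr rfl fun i _ => ?_
      rw [HahnSeries.coeff_smul, aux_deriv_iter_coeff, smul_eq_mul]
    constructor
    · intro m hm
      rw [hco]
      refine Finset.sum_eq_zero fun i hi => ?_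
      rw [(aux_mul_low (b i) y (c + i) n (hlow i hi) hy).1 _ (by omega)]
      simp
    · rw [hco, Polynomial.eval_finsetSum, Finset.sum_mul]
      refine Finset.sum_congr rfl fun i hi => ?_
      rw [show n + c + (i : ℤ) = c + i + n by ring,
        (aux_mul_low (b i) y (c + i) n (hlow i hi) hy).2, eval_mul, eval_C]
      ring
  · have hfin : (Q.rootSet F).Finite := Polynomial.rootSet_finite _ _
    refine (hfin.preimage (f := fun n : ℤ => ((n + c : ℤ) : F) + 1) ?_).subset ?_
    · intro a _ a' _ h
      simp only [add_left_inj, Int.cast_inj] at h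
      exact h
    · intro n hn
      simp only [Set.mem_ofPred_eq] at hn
      simp only [Set.mem_preimage, Polynomial.mem_rootSet]
      refine ⟨hQ, ?_⟩
      simpa using hn

/-- Kernel and cokernel of a connection over `F((t))`. -/
theorem aux_ker {F : Type u} [Field F] [CharZero F] {E : Type v} [AddCommGroup E]
    [Module (LaurentSeries F) E] [FiniteDimensional (LaurentSeries F) E]
    [Module F E] [IsScalarTower F (LaurentSeries F) E] (D : E →ₗ[F] E)
    (leib : ∀ (f : LaurentSeries F) (e : E),
      D (f • e) = LaurentSeries.derivative F f • e + f • D e) :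
    FiniteDimensional F (LinearMap.ker D) := by
  have key : ∀ (m : ℕ) (w : Fin m → E), (∀ i, D (w i) = 0) → LinearIndependent F w →
      LinearIndependent (LaurentSeries F) w := by
    intro m
    induction m with
    | zero => intro w _ _; exact linearIndependent_empty_type
    | succ m ih =>
      intro w hw hli
      rw [linearIndependent_finSucc] at hli ⊢
      have ih' := ih (Fin.tail w) (fun i => hw _) hli.1
      refine ⟨ih', fun hmem => hli.2 ?_⟩
      rw [Submodule.mem_span_range_iff_exists_fun] at hmem ⊢
      obtain ⟨f, hf⟩ := hmem
      have h0 : ∑ i, LaurentSeries.derivative F (f i) • Fin.tail w i = 0 := by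
        have h1 := hw 0
        rw [← hf, map_sum] at h1
        rw [← h1]
        refine Finset.sum_congr rfl fun i _ => ?_
        have : D (Fin.tail w i) = 0 := hw _
        rw [leib, this, smul_zero, add_zero]
      have h2 := Fintype.linearIndependent_iff.mp ih' _ h0
      refine ⟨fun i => (f i).coeff 0, ?_⟩
      rw [← hf]
      refine Finset.sum_congr rfl fun i _ => ?_
      have h3 : f i = (f i).coeff 0 • (1 : LaurentSeries F) := by
        ext m
        rw [HahnSeries.coeff_smul, HahnSeries.coeff_one]
        by_cases hm : m = 0
        · simp [hm]
        · have h4 := aux_deriv_coeff (f i) (m - 1)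
          rw [h2 i] at h4
          simp only [HahnSeries.coeff_zero, Int.cast_sub, Int.cast_one, sub_add_cancel] at h4
          rcases mul_eq_zero.mp h4.symm with h5 | h5
          · exact absurd (by exact_mod_cast h5) hm
          · simp [h5, hm]
      conv_rhs => rw [h3, smul_assoc, one_smul]
  refine Module.rank_lt_aleph0_iff.mp ?_
  refine lt_of_le_of_lt (b := (Module.finrank (LaurentSeries F) E : Cardinal)) ?_
    Cardinal.natCast_lt_aleph0
  rw [← not_lt]
  intro hlt
  have hlt' : ((Module.finrank (LaurentSeries F) E + 1 : ℕ) : Cardinal) ≤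
      Module.rank F (LinearMap.ker D) := by
    rw [Nat.cast_succ, ← Cardinal.succ_natCast]
    exact Order.succ_le_of_lt hlt
  obtain ⟨w, hw⟩ := (Module.le_rank_iff).mp hlt'
  have h1 := key _ (fun i => (w i : E)) (fun i => (w i).2)
    (hw.map' (LinearMap.ker D).subtype (Submodule.ker_subtype _))
  have h2 := h1.fintype_card_le_finrank
  simp at h2

theorem aux_coker {F : Type u} [Field F] [CharZero F] {E : Type v} [AddCommGroup E]
    [Module (LaurentSeries F) E] [FiniteDimensional (LaurentSeries F) E]
    [Module F E] [IsScalarTower F (LaurentSeries F) E] (D : E →ₗ[F] E)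
    (leib : ∀ (f : LaurentSeries F) (e : E),
      D (f • e) = LaurentSeries.derivative F f • e + f • D e) :
    FiniteDimensional F (E ⧸ LinearMap.range D) := by
  classical
  -- adjoint identity
  have adj : ∀ (e : E) (i : ℕ) (f : LaurentSeries F),
      f • (D ^ i) e - ((-1 : F) ^ i • ((LaurentSeries.derivative F (V := F)) ^ i) f) • e ∈
        LinearMap.range D := by
    intro e i
    induction i with
    | zero => intro f; simp
    | succ i ih =>
      intro f
      have h1 := ih (LaurentSeries.derivative F f)
      have h2 : D (f • (D ^ i) e) ∈ LinearMap.range D := ⟨_, rfl⟩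
      have h3 := (LinearMap.range D).sub_mem h2 h1
      rw [leib] at h3
      convert h3 using 1
      rw [pow_succ' D, pow_succ (LaurentSeries.derivative F (V := F)), Module.End.mul_apply,
        Module.End.mul_apply, pow_succ, mul_neg_one, neg_smul, neg_smul]
      abel
  have key : ∀ e : E, ∃ V : Submodule F E, V.FG ∧ ∀ f : LaurentSeries F,
      f • e ∈ LinearMap.range D ⊔ V := by
    intro e
    have hdep : ¬ LinearIndependent (LaurentSeries F) (fun i : ℕ => (D ^ i) e) := by
      intro h
      have h1 := h.finite
      exact _root_.not_finite ℕ
    rw [not_linearIndependent_iff] at hdep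
    obtain ⟨s, b, hsum, i, hi, hbi⟩ := hdep
    obtain ⟨V, hV, hV'⟩ := aux_adjoint s b ⟨i, hi, hbi⟩
    let ev : LaurentSeries F →ₗ[F] E := (LinearMap.toSpanSingleton (LaurentSeries F) E e).restrictScalars F
    refine ⟨V.map ev, hV.map _, fun f => ?_⟩
    obtain ⟨y, v, hv, h⟩ := hV' f
    rw [h, add_smul]
    refine Submodule.add_mem_sup ?_ ⟨v, hv, rfl⟩
    have h1 : ∑ i ∈ s, ((b i * y) • (D ^ i) e - ((-1 : F) ^ i •
        ((LaurentSeries.derivative F (V := F)) ^ i) (b i * y)) • e) ∈ LinearMap.range D :=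
      Submodule.sum_mem _ fun i _ => adj e i _
    rw [Finset.sum_sub_distrib, ← Finset.sum_smul] at h1
    have h2 : ∑ i ∈ s, (b i * y) • (D ^ i) e = 0 := by
      have : ∀ i ∈ s, (b i * y) • (D ^ i) e = y • (b i • (D ^ i) e) := fun i _ => by
        rw [smul_smul, mul_comm]
      rw [Finset.sum_congr rfl this, ← Finset.smul_sum, hsum, smul_zero]
    rw [h2, zero_sub] at h1
    simpa using (LinearMap.range D).neg_mem h1
  choose V hV hV' using key
  let B := Module.finBasis (LaurentSeries F) E
  let W : Submodule F E := ⨆ j, V (B j)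
  have hW : W.FG := Submodule.fg_iSup _ fun j => hV _
  have htop : LinearMap.range D ⊔ W = ⊤ := by
    rw [eq_top_iff]
    rintro x -
    rw [← B.sum_repr x]
    refine Submodule.sum_mem _ fun j _ => ?_
    exact (sup_le_sup_left (le_iSup (fun j => V (B j)) j) _) (hV' (B j) (B.repr x j))
  have : (⊤ : Submodule F (E ⧸ LinearMap.range D)) = W.map (LinearMap.range D).mkQ := by
    have h1 : (⊤ : Submodule F E).map (LinearMap.range D).mkQ = ⊤ := by
      rw [← LinearMap.range_eq_map, Submodule.range_mkQ]
    have h2 : (LinearMap.range D).map (LinearMap.range D).mkQ = ⊥ := by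
      rw [← le_bot_iff, Submodule.map_le_iff_le_comap]
      intro x hx
      simpa using hx
    rw [← h1, ← htop, Submodule.map_sup, h2, bot_sup_eq]
  exact ⟨this ▸ hW.map _⟩

end Analytic
section Koszul

/-- The ungraded Koszul differential. -/
noncomputable def auxD (k : Type u) [Field k] (n : ℕ) (E : Type v) [AddCommGroup E]
    [Module k E] (Dop : Fin n → (E →ₗ[k] E)) :
    (Finset (Fin n) → E) →ₗ[k] (Finset (Fin n) → E) where
  toFun φ N := ∑ i ∈ N, ((-1 : ℤ) ^ (N.filter (fun j => j < i)).card) • Dop i (φ (N.erase i))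
  map_add' φ ψ := by
    funext N
    simp only [Pi.add_apply, map_add, smul_add]
    exact Finset.sum_add_distrib
  map_smul' r φ := by
    funext N
    simp only [RingHom.id_apply, Pi.smul_apply, map_smul]
    rw [Finset.smul_sum]
    exact Finset.sum_congr rfl fun i _ => (smul_comm _ _ _)

theorem auxD_apply (k : Type u) [Field k] (n : ℕ) (E : Type v) [AddCommGroup E]
    [Module k E] (Dop : Fin n → (E →ₗ[k] E)) (φ : Finset (Fin n) → E) (N : Finset (Fin n)) :
    auxD k n E Dop φ N =
      ∑ i ∈ N, ((-1 : ℤ) ^ (N.filter (fun j => j < i)).card) • Dop i (φ (N.erase i)) := rfl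

/-- Finiteness of the homology, elementwise. -/
def auxFin (k : Type u) [Field k] {A : Type v} [AddCommGroup A] [Module k A]
    (d : A →ₗ[k] A) : Prop :=
  ∃ V : Submodule k A, V.FG ∧ ∀ x, d x = 0 → ∃ y, ∃ v ∈ V, x = d y + v

/-- The sign operator. -/
def auxE {n : ℕ} {E : Type v} [AddCommGroup E] (φ : Finset (Fin n) → E) : Finset (Fin n) → E :=
  fun N => ((-1 : ℤ) ^ N.card) • φ N

/-- embed a subset of `Fin n`. -/
def auxS {n : ℕ} (N : Finset (Fin n)) : Finset (Fin (n + 1)) := N.map Fin.castSuccEmb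

/-- embed a subset of `Fin n` and add the last element. -/
def auxL {n : ℕ} (N : Finset (Fin n)) : Finset (Fin (n + 1)) := insert (Fin.last n) (auxS N)

theorem last_notMem_auxS {n : ℕ} (N : Finset (Fin n)) : Fin.last n ∉ auxS N := by
  simp [auxS, Fin.castSucc_ne_last]

theorem auxS_erase {n : ℕ} (N : Finset (Fin n)) (i : Fin n) :
    (auxS N).erase i.castSucc = auxS (N.erase i) := by
  simp [auxS, Finset.map_erase]

theorem auxL_erase {n : ℕ} (N : Finset (Fin n)) (i : Fin n) :
    (auxL N).erase i.castSucc = auxL (N.erase i) := by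
  rw [auxL, auxL, Finset.erase_insert_of_ne (Fin.castSucc_ne_last i).symm, auxS_erase]

theorem auxL_erase_last {n : ℕ} (N : Finset (Fin n)) :
    (auxL N).erase (Fin.last n) = auxS N := by
  rw [auxL, Finset.erase_insert (last_notMem_auxS N)]

theorem auxS_filter {n : ℕ} (N : Finset (Fin n)) (i : Fin n) :
    ((auxS N).filter (fun j => j < i.castSucc)).card = (N.filter (fun j => j < i)).card := by
  rw [auxS, Finset.filter_map, Finset.card_map]
  congr 1

theorem auxL_filter {n : ℕ} (N : Finset (Fin n)) (i : Fin n) :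
    ((auxL N).filter (fun j => j < i.castSucc)).card = (N.filter (fun j => j < i)).card := by
  rw [auxL, Finset.filter_insert, if_neg (not_lt.mpr (Fin.le_last _)), auxS_filter]

theorem auxL_filter_last {n : ℕ} (N : Finset (Fin n)) :
    ((auxL N).filter (fun j => j < Fin.last n)).card = N.card := by
  rw [auxL, Finset.filter_insert, if_neg (lt_irrefl _), auxS, Finset.filter_map, Finset.card_map,
    Finset.filter_true_of_mem]
  intro i _
  exact Fin.castSucc_lt_last i

theorem auxD_S (k : Type u) [Field k] (n : ℕ) (E : Type v) [AddCommGroup E]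
    [Module k E] (Dop : Fin (n + 1) → (E →ₗ[k] E)) (φ : Finset (Fin (n + 1)) → E)
    (N : Finset (Fin n)) :
    auxD k (n + 1) E Dop φ (auxS N) =
      auxD k n E (fun i => Dop i.castSucc) (fun M => φ (auxS M)) N := by
  rw [auxD_apply, auxD_apply]
  have : ∀ f : Fin (n + 1) → E, ∑ i ∈ auxS N, f i = ∑ i ∈ N, f i.castSucc := by
    intro f
    rw [auxS, Finset.sum_map]
    rfl
  rw [this]
  refine Finset.sum_congr rfl fun i _ => ?_
  rw [auxS_filter, auxS_erase]

theorem auxD_L (k : Type u) [Field k] (n : ℕ) (E : Type v) [AddCommGroup E]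
    [Module k E] (Dop : Fin (n + 1) → (E →ₗ[k] E)) (φ : Finset (Fin (n + 1)) → E)
    (N : Finset (Fin n)) :
    auxD k (n + 1) E Dop φ (auxL N) =
      auxD k n E (fun i => Dop i.castSucc) (fun M => φ (auxL M)) N +
        Dop (Fin.last n) (auxE (fun M => φ (auxS M)) N) := by
  rw [auxD_apply, auxD_apply]
  have : ∀ f : Fin (n + 1) → E, ∑ i ∈ auxL N, f i = ∑ i ∈ N, f i.castSucc + f (Fin.last n) := by
    intro f
    rw [auxL, Finset.sum_insert (last_notMem_auxS N), auxS, Finset.sum_map, add_comm]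
    rfl
  rw [this, auxL_filter_last, auxL_erase_last, auxE, map_zsmul]
  congr 1
  refine Finset.sum_congr rfl fun i _ => ?_
  rw [auxL_filter, auxL_erase]

/-- The trace of a subset on `Fin n`. -/
def auxR {n : ℕ} (N : Finset (Fin (n + 1))) : Finset (Fin n) :=
  Finset.univ.filter (fun i => i.castSucc ∈ N)

theorem auxR_S {n : ℕ} (N : Finset (Fin n)) : auxR (auxS N) = N := by
  ext i; simp [auxR, auxS]

theorem auxR_L {n : ℕ} (N : Finset (Fin n)) : auxR (auxL N) = N := by
  ext i; simp [auxR, auxL, auxS, Fin.castSucc_ne_last]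

theorem aux_cases {n : ℕ} (N : Finset (Fin (n + 1))) :
    N = auxS (auxR N) ∨ N = auxL (auxR N) := by
  by_cases h : Fin.last n ∈ N
  · right
    ext i
    refine Fin.lastCases ?_ (fun i => ?_) i
    · simp [h, auxL]
    · simp [auxL, auxS, auxR, Fin.castSucc_ne_last]
  · left
    ext i
    refine Fin.lastCases ?_ (fun i => ?_) i
    · simp [h, last_notMem_auxS]
    · simp [auxS, auxR]

theorem aux_ext {n : ℕ} {E : Type v} {φ ψ : Finset (Fin (n + 1)) → E}
    (h1 : ∀ N, φ (auxS N) = ψ (auxS N)) (h2 : ∀ N, φ (auxL N) = ψ (auxL N)) : φ = ψ := by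
  funext N
  rcases aux_cases N with h | h
  · rw [h]; exact h1 _
  · rw [h]; exact h2 _

/-- Glue two functions. -/
noncomputable def auxG (k : Type u) [Field k] (n : ℕ) (E : Type v) [AddCommGroup E] [Module k E] :
    ((Finset (Fin n) → E) × (Finset (Fin n) → E)) →ₗ[k] (Finset (Fin (n + 1)) → E) where
  toFun p N := if Fin.last n ∈ N then p.2 (auxR N) else p.1 (auxR N)
  map_add' p q := by
    funext N
    simp only [Pi.add_apply, Prod.fst_add, Prod.snd_add]
    split_ifs <;> rfl
  map_smul' r p := by
    funext N
    simp only [Pi.smul_apply, Prod.smul_fst, Prod.smul_snd, RingHom.id_apply]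
    split_ifs <;> rfl

theorem auxG_S (k : Type u) [Field k] (n : ℕ) (E : Type v) [AddCommGroup E] [Module k E]
    (p : (Finset (Fin n) → E) × (Finset (Fin n) → E)) (N : Finset (Fin n)) :
    auxG k n E p (auxS N) = p.1 N := by
  change (if Fin.last n ∈ auxS N then _ else _) = _
  rw [if_neg (last_notMem_auxS N), auxR_S]

theorem auxG_L (k : Type u) [Field k] (n : ℕ) (E : Type v) [AddCommGroup E] [Module k E]
    (p : (Finset (Fin n) → E) × (Finset (Fin n) → E)) (N : Finset (Fin n)) :
    auxG k n E p (auxL N) = p.2 N := by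
  change (if Fin.last n ∈ auxL N then _ else _) = _
  rw [if_pos (by simp [auxL]), auxR_L]

theorem auxE_E {n : ℕ} {E : Type v} [AddCommGroup E] (φ : Finset (Fin n) → E) :
    auxE (auxE φ) = φ := by
  funext N
  simp only [auxE, smul_smul, ← mul_pow]
  simp

theorem auxD_E (k : Type u) [Field k] (n : ℕ) (E : Type v) [AddCommGroup E]
    [Module k E] (Dop : Fin n → (E →ₗ[k] E)) (φ : Finset (Fin n) → E) :
    auxD k n E Dop (auxE φ) = - auxE (auxD k n E Dop φ) := by
  funext N
  rw [Pi.neg_apply]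
  simp only [auxE, auxD_apply]
  rw [Finset.smul_sum, ← Finset.sum_neg_distrib]
  refine Finset.sum_congr rfl fun i hi => ?_
  rw [map_zsmul, ← neg_smul, smul_comm, smul_smul, smul_smul]
  congr 1
  have h := Finset.card_erase_add_one hi
  rw [← h, pow_succ]
  ring

/-- Naturality of the Koszul differential. -/
theorem auxD_nat (k : Type u) [Field k] (n : ℕ) (E : Type v) [AddCommGroup E]
    [Module k E] (Dop : Fin n → (E →ₗ[k] E)) (E' : Type v) [AddCommGroup E']
    [Module k E'] (Dop' : Fin n → (E' →ₗ[k] E')) (g : E →ₗ[k] E')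
    (hg : ∀ i e, g (Dop i e) = Dop' i (g e)) (φ : Finset (Fin n) → E) :
    auxD k n E' Dop' (fun N => g (φ N)) = fun N => g (auxD k n E Dop φ N) := by
  funext N
  rw [auxD_apply, auxD_apply, map_sum]
  refine Finset.sum_congr rfl fun i hi => ?_
  rw [map_zsmul, hg]

theorem auxD_sq (k : Type u) [Field k] (n : ℕ) (E : Type v) [AddCommGroup E]
    [Module k E] (Dop : Fin n → (E →ₗ[k] E))
    (flat : ∀ i j : Fin n, (Dop i).comp (Dop j) = (Dop j).comp (Dop i))
    (φ : Finset (Fin n) → E) : auxD k n E Dop (auxD k n E Dop φ) = 0 := by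
  induction n with
  | zero =>
    funext N
    have : N = ∅ := Subsingleton.elim _ _
    subst this
    rfl
  | succ n ih =>
    have ih' := ih (fun i => Dop i.castSucc) (fun i j => flat _ _)
    apply aux_ext
    · intro N
      rw [auxD_S]
      simp only [auxD_S]
      exact congrFun (ih' _) N
    · intro N
      rw [auxD_L]
      simp only [auxD_L, auxD_S]
      have h1 := auxD_nat k n E (fun i => Dop i.castSucc) E (fun i => Dop i.castSucc)
        (Dop (Fin.last n)) (fun i e => LinearMap.congr_fun (flat _ _) e)
        (auxE (fun M => φ (auxS M)))
      have h2 := auxD_E k n E (fun i => Dop i.castSucc) (fun M => φ (auxS M))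
      have h3 := map_add (auxD k n E (fun i => Dop i.castSucc))
        (fun M => auxD k n E (fun i => Dop i.castSucc) (fun M => φ (auxL M)) M)
        (fun M => Dop (Fin.last n) (auxE (fun M => φ (auxS M)) M))
      have h4 := congrFun h3 N
      rw [Pi.add_apply] at h4
      refine (congrArg (· + _) h4).trans ?_
      rw [h1, h2]
      have h5 := congrFun (ih' (fun M => φ (auxL M))) N
      refine (congrArg (· + _ + _) h5).trans ?_
      simp

/-- Lifting finitely generated submodules. -/
theorem aux_lift {k : Type u} [Field k] {A : Type v} [AddCommGroup A] [Module k A]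
    {B : Type v} [AddCommGroup B] [Module k B] (f : A →ₗ[k] B) (V : Submodule k B) (hV : V.FG) :
    ∃ W : Submodule k A, W.FG ∧ W ≤ V.comap f ∧ ∀ a, f a ∈ V → ∃ w ∈ W, f w = f a := by
  have : FiniteDimensional k V := Module.Finite.iff_fg.mpr hV
  let f' : V.comap f →ₗ[k] V := f.restrict (fun x hx => hx)
  obtain ⟨s, hs⟩ := LinearMap.exists_rightInverse_of_surjective f'.rangeRestrict
    (LinearMap.range_rangeRestrict f')
  let s' : LinearMap.range f' →ₗ[k] A := (V.comap f).subtype ∘ₗ s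
  refine ⟨LinearMap.range s', ?_, ?_, ?_⟩
  · rw [LinearMap.range_eq_map]
    exact Submodule.FG.map _ (Module.Finite.fg_top)
  · rintro _ ⟨x, rfl⟩
    exact (s x).2
  · intro a ha
    let a' : V.comap f := ⟨a, ha⟩
    refine ⟨s' (f'.rangeRestrict a'), ⟨_, rfl⟩, ?_⟩
    have := LinearMap.congr_fun hs (f'.rangeRestrict a')
    have h2 := congrArg (fun z => ((z : V) : B)) (congrArg Subtype.val this)
    exact h2

theorem aux_step (k : Type u) [Field k] (n : ℕ) (E : Type v) [AddCommGroup E]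
    [Module k E] (Dop : Fin (n + 1) → (E →ₗ[k] E))
    (flat : ∀ i j : Fin (n + 1), (Dop i).comp (Dop j) = (Dop j).comp (Dop i))
    (K : Type v) [AddCommGroup K] [Module k K] (DK : Fin n → (K →ₗ[k] K)) (ι : K →ₗ[k] E)
    (hι : ∀ e, Dop (Fin.last n) e = 0 ↔ e ∈ LinearMap.range ι)
    (hιi : Function.Injective ι)
    (hιD : ∀ i e, ι (DK i e) = Dop i.castSucc (ι e))
    (hK : auxFin k (auxD k n K DK))
    (Q : Type v) [AddCommGroup Q] [Module k Q] (DQ : Fin n → (Q →ₗ[k] Q)) (π : E →ₗ[k] Q)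
    (hπ : ∀ e, π e = 0 ↔ e ∈ LinearMap.range (Dop (Fin.last n)))
    (hπs : Function.Surjective π)
    (hπD : ∀ i e, π (Dop i.castSucc e) = DQ i (π e))
    (hQ : auxFin k (auxD k n Q DQ)) :
    auxFin k (auxD k (n + 1) E Dop) := by
  set D := Dop (Fin.last n) with hD
  set d := auxD k n E (fun i => Dop i.castSucc) with hd
  obtain ⟨VK, hVK, hVK'⟩ := hK
  obtain ⟨VQ, hVQ, hVQ'⟩ := hQ
  let P : (Finset (Fin n) → E) →ₗ[k] (Finset (Fin n) → Q) := π.compLeft _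
  let I : (Finset (Fin n) → K) →ₗ[k] (Finset (Fin n) → E) := ι.compLeft _
  -- the cycles, with their projection
  let Z := LinearMap.ker (auxD k (n + 1) E Dop)
  let pr : (Finset (Fin (n + 1)) → E) →ₗ[k] (Finset (Fin n) → Q) :=
    { toFun := fun φ N => π (φ (auxL N))
      map_add' := fun φ ψ => by funext N; simp
      map_smul' := fun r φ => by funext N; simp }
  obtain ⟨W, hW, hWV, hWl⟩ := aux_lift (pr ∘ₗ Z.subtype) VQ hVQ
  let V : Submodule k (Finset (Fin (n + 1)) → E) :=
    W.map Z.subtype ⊔ (VK.map I).map (auxG k n E ∘ₗ LinearMap.inl k _ _)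
  refine ⟨V, (hW.map _).sup ((hVK.map _).map _), ?_⟩
  have dd : ∀ φ, auxD k (n + 1) E Dop (auxD k (n + 1) E Dop φ) = 0 := auxD_sq k (n + 1) E Dop flat
  intro φ hφ
  -- step 1 : the image in the cokernel complex
  have hcyc : auxD k n Q DQ (pr φ) = 0 := by
    have h1 := auxD_nat k n E (fun i => Dop i.castSucc) Q DQ π (fun i e => hπD i e)
      (fun N => φ (auxL N))
    refine h1.trans ?_
    funext N
    have h2 := congrFun hφ (auxL N)
    rw [auxD_L] at h2
    have h3 := congrArg π h2
    rw [map_add] at h3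
    rw [(hπ (Dop (Fin.last n) _)).mpr ⟨_, rfl⟩, add_zero] at h3
    rw [h3]
    simp
  obtain ⟨y, v, hv, hyv⟩ := hVQ' _ hcyc
  choose y' hy' using fun N => hπs (y N)
  -- subtract a boundary
  let φ1 := φ - auxD k (n + 1) E Dop (auxG k n E (0, y'))
  have hφ1 : φ1 ∈ Z := by
    change auxD k (n + 1) E Dop φ1 = 0
    rw [map_sub, hφ, dd, sub_zero]
  have hφ1v : pr φ1 = v := by
    rw [map_sub, hyv]
    have : pr (auxD k (n + 1) E Dop (auxG k n E (0, y'))) = auxD k n Q DQ y := by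
      have h1 := auxD_nat k n E (fun i => Dop i.castSucc) Q DQ π (fun i e => hπD i e) y'
      simp only [hy'] at h1
      rw [show auxD k n Q DQ y = _ from h1]
      funext N
      change π (auxD k (n + 1) E Dop (auxG k n E (0, y')) (auxL N)) = _
      rw [auxD_L, map_add, (hπ (Dop (Fin.last n) _)).mpr ⟨_, rfl⟩, add_zero]
      simp only [auxG_L]
    rw [this, add_sub_cancel_left]
  obtain ⟨w, hw, hwv⟩ := hWl ⟨φ1, hφ1⟩ (by change pr φ1 ∈ VQ; rw [hφ1v]; exact hv)
  let φ2 := φ1 - (w : Finset (Fin (n + 1)) → E)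
  have hφ2 : auxD k (n + 1) E Dop φ2 = 0 := by
    rw [map_sub, show auxD k (n + 1) E Dop φ1 = 0 from hφ1,
      show auxD k (n + 1) E Dop (w : Finset (Fin (n + 1)) → E) = 0 from w.2, sub_zero]
  have hprφ2 : pr φ2 = 0 := by
    rw [map_sub, sub_eq_zero]
    exact hwv.symm
  have hex : ∀ N, ∃ e, D e = φ2 (auxL N) := fun N => (hπ _).mp (congrFun hprφ2 N)
  choose x hx using hex
  let ψ := auxG k n E (auxE x, 0)
  let φ3 := φ2 - auxD k (n + 1) E Dop ψ
  have hφ3 : auxD k (n + 1) E Dop φ3 = 0 := by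
    rw [map_sub, hφ2, dd, sub_zero]
  have hφ3L : ∀ N, φ3 (auxL N) = 0 := by
    intro N
    change φ2 (auxL N) - auxD k (n + 1) E Dop ψ (auxL N) = 0
    rw [auxD_L]
    simp only [ψ, auxG_L, auxG_S]
    have h0 : auxD k n E (fun i => Dop i.castSucc)
      (fun M => (0 : Finset (Fin n) → E) M) N = 0 := by
        exact congrFun (map_zero (auxD k n E (fun i => Dop i.castSucc))) N
    rw [h0, zero_add]
    have h1 : auxE (fun M => auxE x M) = x := auxE_E x
    rw [h1, ← hx N, sub_self]
  have hφ3S : ∀ N, ∃ e, ι e = φ3 (auxS N) := by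
    intro N
    apply (hι _).mp
    have h2 := congrFun hφ3 (auxL N)
    rw [auxD_L] at h2
    simp only [hφ3L] at h2
    have h0 : auxD k n E (fun i => Dop i.castSucc) (fun M => (0 : E)) N = 0 := by
        exact congrFun (map_zero (auxD k n E (fun i => Dop i.castSucc))) N
    rw [h0, zero_add] at h2
    simp only [auxE, map_zsmul] at h2
    have h3 := congrArg (fun z => ((-1 : ℤ) ^ N.card) • z) h2
    simp only [smul_smul, ← mul_pow] at h3
    simpa using h3
  choose a ha using hφ3S
  have hacyc : auxD k n K DK a = 0 := by
    have h1 := auxD_nat k n K DK E (fun i => Dop i.castSucc) ι (fun i e => hιD i e) a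
    funext N
    apply hιi
    rw [← congrFun h1 N]
    simp only [ha]
    rw [← auxD_S, hφ3]
    simp
  obtain ⟨b, u, hu, hbu⟩ := hVK' a hacyc
  let θ := auxG k n E (I b, 0)
  have hθ : φ3 = auxD k (n + 1) E Dop θ + auxG k n E (I u, 0) := by
    have hIb := auxD_nat k n K DK E (fun i => Dop i.castSucc) ι (fun i e => hιD i e) b
    apply aux_ext
    · intro N
      rw [Pi.add_apply, auxD_S, auxG_S, ← ha N, congrFun hbu N, Pi.add_apply, map_add,
        ← congrFun hIb N]
      simp only [θ, auxG_S]
      rfl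
    · intro N
      rw [Pi.add_apply, auxD_L, auxG_L, hφ3L]
      simp only [θ, auxG_S, auxG_L]
      have h0 : auxD k n E (fun i => Dop i.castSucc)
        (fun M => (0 : Finset (Fin n) → E) M) N = 0 := by
          exact congrFun (map_zero (auxD k n E (fun i => Dop i.castSucc))) N
      rw [h0, zero_add]
      have h4 : D (I b N) = 0 := (hι _).mpr ⟨b N, rfl⟩
      simp only [auxE, map_zsmul]
      rw [← hD, h4]
      simp
  refine ⟨auxG k n E (0, y') + ψ + θ, (w : Finset (Fin (n + 1)) → E) + auxG k n E (I u, 0),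
    ?_, ?_⟩
  · refine Submodule.add_mem_sup ⟨w, hw, rfl⟩ ⟨I u, ⟨u, hu, rfl⟩, rfl⟩
  · have : φ = auxD k (n + 1) E Dop (auxG k n E (0, y')) + w + auxD k (n + 1) E Dop ψ + φ3 := by
      simp only [φ3, φ2, φ1]
      abel
    rw [map_add, map_add]
    rw [hθ] at this
    rw [this]
    abel

end Koszul

section Final

theorem coeffExt_C {F : Type u} [Field F] (d : F → F) (hd : d 0 = 0) (a : F) :
    coeffExt d hd (HahnSeries.C a) = HahnSeries.C (d a) := by
  ext m
  change d ((HahnSeries.C a : LaurentSeries F).coeff m) = _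
  by_cases hm : m = 0
  · subst hm; simp
  · rw [HahnSeries.C_apply, HahnSeries.C_apply, HahnSeries.coeff_single_of_ne hm,
      HahnSeries.coeff_single_of_ne hm, hd]

theorem aux_deriv_C {F : Type u} [Field F] (a : F) :
    LaurentSeries.derivative F (HahnSeries.C a : LaurentSeries F) = 0 := by
  ext m
  rw [aux_deriv_coeff]
  by_cases hm : m + 1 = 0
  · have : (m : F) + 1 = 0 := by exact_mod_cast congrArg (Int.cast : ℤ → F) hm
    rw [this]; simp
  · rw [HahnSeries.C_apply, HahnSeries.coeff_single_of_ne hm]; simp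

/-- The induced operator on a quotient. -/
noncomputable def auxQ {k F : Type u} [Field k] [Field F] [Algebra k F] {E : Type v}
    [AddCommGroup E] [Module F E] [Module k E] [IsScalarTower k F E] (p : Submodule F E)
    (g : E →ₗ[k] E) (hg : ∀ x ∈ p, g x ∈ p) : (E ⧸ p) →ₗ[k] (E ⧸ p) where
  toFun := QuotientAddGroup.map p.toAddSubgroup p.toAddSubgroup g.toAddMonoidHom hg
  map_add' x y := map_add (QuotientAddGroup.map p.toAddSubgroup p.toAddSubgroup
    g.toAddMonoidHom hg) x y
  map_smul' r x := by
    obtain ⟨x, rfl⟩ := Submodule.Quotient.mk_surjective p x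
    rw [← Submodule.Quotient.mk_smul]
    change Submodule.Quotient.mk (g (r • x)) = r • Submodule.Quotient.mk (g x)
    rw [map_smul, Submodule.Quotient.mk_smul]

theorem auxQ_mk {k F : Type u} [Field k] [Field F] [Algebra k F] {E : Type v}
    [AddCommGroup E] [Module F E] [Module k E] [IsScalarTower k F E] (p : Submodule F E)
    (g : E →ₗ[k] E) (hg : ∀ x ∈ p, g x ∈ p) (x : E) :
    auxQ p g hg (Submodule.Quotient.mk x) = Submodule.Quotient.mk (g x) := rfl

theorem aux_field_step (k F : Type u) [Field k] [Field F] [CharZero F] [Algebra k F] (n : ℕ)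
    (δ : Fin n → F → F) (hδ : ∀ i, δ i 0 = 0)
    (IH : ∀ (E : Type v) [AddCommGroup E] [Module F E] [FiniteDimensional F E]
      [Module k E] [IsScalarTower k F E] (Dop : Fin n → (E →ₗ[k] E)),
      (∀ (i : Fin n) (f : F) (e : E), Dop i (f • e) = δ i f • e + f • Dop i e) →
      (∀ i j : Fin n, (Dop i).comp (Dop j) = (Dop j).comp (Dop i)) →
      auxFin k (auxD k n E Dop))
    (E : Type v) [AddCommGroup E] [Module (LaurentSeries F) E]
    [FiniteDimensional (LaurentSeries F) E]
    [Module k E] [IsScalarTower k (LaurentSeries F) E]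
    (Dop : Fin (n + 1) → (E →ₗ[k] E))
    (leib1 : ∀ (i : Fin n) (f : LaurentSeries F) (e : E),
      Dop i.castSucc (f • e) = coeffExt (δ i) (hδ i) f • e + f • Dop i.castSucc e)
    (leib2 : ∀ (f : LaurentSeries F) (e : E),
      Dop (Fin.last n) (f • e) = LaurentSeries.derivative F f • e + f • Dop (Fin.last n) e)
    (flat : ∀ i j : Fin (n + 1), (Dop i).comp (Dop j) = (Dop j).comp (Dop i)) :
    auxFin k (auxD k (n + 1) E Dop) := by
  letI : Module F E := Module.compHom E (HahnSeries.C : F →+* LaurentSeries F)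
  have smulC : ∀ (a : F) (e : E), a • e = (HahnSeries.C a : LaurentSeries F) • e :=
    fun a e => rfl
  have : IsScalarTower F (LaurentSeries F) E := ⟨fun a x e => by
    rw [smulC, ← HahnSeries.C_mul_eq_smul, mul_smul]⟩
  have : IsScalarTower k F E := ⟨fun r a e => by
    rw [smulC, smulC, ← smul_assoc]
    congr 1
    ext m
    rw [HahnSeries.coeff_smul, HahnSeries.C_apply, HahnSeries.C_apply]
    by_cases hm : m = 0
    · subst hm; simp
    · rw [HahnSeries.coeff_single_of_ne hm, HahnSeries.coeff_single_of_ne hm, smul_zero]⟩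
  have comm : ∀ i j e, Dop i (Dop j e) = Dop j (Dop i e) :=
    fun i j e => LinearMap.congr_fun (flat i j) e
  let D : E →ₗ[F] E :=
    { toFun := Dop (Fin.last n)
      map_add' := map_add _
      map_smul' := fun a e => by
        rw [smulC, leib2, aux_deriv_C, zero_smul, zero_add]; rfl }
  have hDa : ∀ e, D e = Dop (Fin.last n) e := fun e => rfl
  have leibF : ∀ (i : Fin n) (a : F) (e : E),
      Dop i.castSucc (a • e) = δ i a • e + a • Dop i.castSucc e := by
    intro i a e
    rw [smulC, leib1, coeffExt_C]; rfl
  have fK : FiniteDimensional F (LinearMap.ker D) := aux_ker D leib2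
  have fQ : FiniteDimensional F (E ⧸ LinearMap.range D) := aux_coker D leib2
  let DK : Fin n → (LinearMap.ker D →ₗ[k] LinearMap.ker D) := fun i =>
    { toFun := fun e => ⟨Dop i.castSucc e, by
        have h : Dop (Fin.last n) (e : E) = 0 := e.2
        rw [LinearMap.mem_ker, hDa, comm, h, map_zero]⟩
      map_add' := fun x y => by ext; simp
      map_smul' := fun r x => by ext; simp }
  have hst : ∀ (i : Fin n), ∀ x ∈ LinearMap.range D, Dop i.castSucc x ∈ LinearMap.range D := by
    rintro i _ ⟨x, rfl⟩
    exact ⟨Dop i.castSucc x, by rw [hDa, hDa, comm]⟩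
  let DQ : Fin n → ((E ⧸ LinearMap.range D) →ₗ[k] (E ⧸ LinearMap.range D)) := fun i =>
    auxQ (LinearMap.range D) (Dop i.castSucc) (hst i)
  refine aux_step k n E Dop flat (LinearMap.ker D) DK
    ((LinearMap.ker D).subtype.restrictScalars k) ?_ ?_ ?_ ?_
    (E ⧸ LinearMap.range D) DQ ((LinearMap.range D).mkQ.restrictScalars k) ?_ ?_ ?_ ?_
  · intro e
    constructor
    · intro h; exact ⟨⟨e, h⟩, rfl⟩
    · rintro ⟨x, rfl⟩; exact x.2
  · exact Subtype.val_injective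
  · intro i e; rfl
  · refine IH _ DK ?_ ?_
    · intro i f e
      ext
      exact leibF i f e
    · intro i j
      ext e
      exact comm _ _ _
  · intro e
    exact Submodule.Quotient.mk_eq_zero _
  · exact Submodule.Quotient.mk_surjective _
  · intro i e; rfl
  · refine IH _ DQ ?_ ?_
    · intro i f e
      obtain ⟨e, rfl⟩ := Submodule.Quotient.mk_surjective _ e
      simp only [DQ, ← Submodule.Quotient.mk_smul, auxQ_mk, leibF, Submodule.Quotient.mk_add]
    · intro i j
      refine LinearMap.ext fun e => ?_
      obtain ⟨e, rfl⟩ := Submodule.Quotient.mk_surjective _ e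
      simp only [DQ, LinearMap.comp_apply, auxQ_mk, comm]

theorem aux_alg {k F : Type u} [Field k] [Field F] [Algebra k F] (r : k) (x : LaurentSeries F) :
    (HahnSeries.powerSeriesAlgebra (R := F) (Γ := ℤ) (S := k)).toSMul.smul r x = r • x := by
  change HahnSeries.ofPowerSeries ℤ F (algebraMap k (PowerSeries F) r) * x = _
  rw [PowerSeries.algebraMap_apply, HahnSeries.ofPowerSeries_C, HahnSeries.C_mul_eq_smul]
  ext m
  rw [HahnSeries.coeff_smul, HahnSeries.coeff_smul, algebraMap_smul]

theorem pder_zero (k : Type u) [Field k] (n : ℕ) (i : Fin n) : pder k n i 0 = 0 :=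
  ((FnPkg k n).2.2.2.1 i).2

theorem pder_castSucc (k : Type u) [Field k] (n : ℕ) (i : Fin n) (f : LaurentSeries (Fn k n)) :
    pder k (n + 1) i.castSucc f = coeffExt (pder k n i) (pder_zero k n i) f := by
  exact congrFun (congrArg Subtype.val (Fin.lastCases_castSucc
    (motive := fun _ => {f : LaurentSeries (Fn k n) → LaurentSeries (Fn k n) // f 0 = 0})
    (last := ⟨fun y => LaurentSeries.derivative (Fn k n) (V := Fn k n) y, map_zero _⟩)
    (cast := fun j => ⟨coeffExt (pder k n j) (pder_zero k n j), by
      ext g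
      exact pder_zero k n j⟩) i)) f

theorem pder_last (k : Type u) [Field k] (n : ℕ) (f : LaurentSeries (Fn k n)) :
    pder k (n + 1) (Fin.last n) f = LaurentSeries.derivative (Fn k n) f := by
  exact congrFun (congrArg Subtype.val (Fin.lastCases_last
    (motive := fun _ => {f : LaurentSeries (Fn k n) → LaurentSeries (Fn k n) // f 0 = 0})
    (last := ⟨fun y => LaurentSeries.derivative (Fn k n) (V := Fn k n) y, map_zero _⟩)
    (cast := fun j => ⟨coeffExt (pder k n j) (pder_zero k n j), by
      ext g
      exact pder_zero k n j⟩))) f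

theorem aux_main (k : Type u) [Field k] [CharZero k] (n : ℕ) :
    ∀ (E : Type v) [AddCommGroup E] [Module (Fn k n) E] [FiniteDimensional (Fn k n) E]
      [Module k E] [IsScalarTower k (Fn k n) E] (Dop : Fin n → (E →ₗ[k] E)),
      (∀ (i : Fin n) (f : Fn k n) (e : E), Dop i (f • e) = pder k n i f • e + f • Dop i e) →
      (∀ i j : Fin n, (Dop i).comp (Dop j) = (Dop j).comp (Dop i)) →
      auxFin k (auxD k n E Dop) := by
  induction n with
  | zero =>
    intro E _ _ fd _ _ Dop _ _
    have h1 : FiniteDimensional k (Fn k 0) := inferInstanceAs (FiniteDimensional k k)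
    have h2 : FiniteDimensional k E := FiniteDimensional.trans k (Fn k 0) E
    exact ⟨⊤, Module.Finite.fg_top, fun x _ => ⟨0, x, trivial, by simp⟩⟩
  | succ n ih =>
    intro E _ m1 fd m2 st Dop leib flat
    have : CharZero (Fn k n) := charZero_of_injective_algebraMap (algebraMap k (Fn k n)).injective
    letI m1' : Module (LaurentSeries (Fn k n)) E := m1
    have fd' : FiniteDimensional (LaurentSeries (Fn k n)) E := fd
    have st' : IsScalarTower k (LaurentSeries (Fn k n)) E := by
      refine ⟨fun r x e => ?_⟩
      rw [← aux_alg r x]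
      exact st.smul_assoc r x e
    refine aux_field_step k (Fn k n) n (pder k n) (pder_zero k n) ih E Dop ?_ ?_ flat
    · intro i f e
      rw [← pder_castSucc]
      exact leib i.castSucc f e
    · intro f e
      rw [← pder_last]
      exact leib (Fin.last n) f e

/-- restriction to the degree `p` part -/
def auxRes (k : Type u) [Field k] (n : ℕ) (E : Type v) [AddCommGroup E] [Module k E] (p : ℕ) :
    (Finset (Fin n) → E) →ₗ[k] deRhamPiece n E p where
  toFun φ N := φ N.1
  map_add' _ _ := rfl
  map_smul' _ _ := rfl

theorem auxRes_D (k : Type u) [Field k] (n : ℕ) (E : Type v) [AddCommGroup E] [Module k E]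
    (Dop : Fin n → (E →ₗ[k] E)) (p : ℕ) (φ : Finset (Fin n) → E) :
    auxRes k n E (p + 1) (auxD k n E Dop φ) = deRhamD k n E Dop p (auxRes k n E p φ) := by
  funext N
  change ∑ i ∈ N.1, _ = ∑ i ∈ N.1.attach, _
  rw [← Finset.sum_attach]
  rfl

/-- extension by zero -/
noncomputable def auxExt {n : ℕ} {E : Type v} [AddCommGroup E] {p : ℕ} (x : deRhamPiece n E p) :
    Finset (Fin n) → E := fun N => if h : N.card = p then x ⟨N, h⟩ else 0

theorem auxRes_Ext (k : Type u) [Field k] (n : ℕ) (E : Type v) [AddCommGroup E] [Module k E]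
    (p : ℕ) (x : deRhamPiece n E p) : auxRes k n E p (auxExt x) = x := by
  funext N
  change (if h : N.1.card = p then x ⟨N.1, h⟩ else 0) = _
  rw [dif_pos N.2]

theorem auxExt_D (k : Type u) [Field k] (n : ℕ) (E : Type v) [AddCommGroup E] [Module k E]
    (Dop : Fin n → (E →ₗ[k] E)) (p : ℕ) (x : deRhamPiece n E p)
    (hx : deRhamD k n E Dop p x = 0) : auxD k n E Dop (auxExt x) = 0 := by
  funext N
  by_cases hN : N.card = p + 1
  · have h1 := auxRes_D k n E Dop p (auxExt x)
    rw [auxRes_Ext, hx] at h1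
    exact congrFun h1 ⟨N, hN⟩
  · rw [auxD_apply]
    refine Finset.sum_eq_zero fun i hi => ?_
    have h2 := Finset.card_erase_add_one hi
    rw [auxExt, dif_neg (by omega), map_zero, smul_zero]

end Final

/-- Let `(E, ∇)` be a flat connection on the `n`-dimensional local field
`F_n = k((t₁))⋯((t_n))` (char k = 0), given by commuting operators `∇₁, …, ∇_n` satisfying
the Leibniz rule with respect to the partial derivatives `∂/∂tᵢ`.  Then every de Rham
cohomology group `H^i_∇(E)` of the complex `E → E ⊗ Ω¹ → ⋯ → E ⊗ Ω^n` is a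
finite-dimensional `k`-vector space. -/
theorem deRham_cohomology_finiteDimensional
    (k : Type u) [Field k] [CharZero k] (n : ℕ)
    (E : Type v) [AddCommGroup E] [Module (Fn k n) E]
    [FiniteDimensional (Fn k n) E]
    [Module k E] [IsScalarTower k (Fn k n) E]
    (Dop : Fin n → (E →ₗ[k] E))
    (leibniz : ∀ (i : Fin n) (f : Fn k n) (e : E),
      Dop i (f • e) = pder k n i f • e + f • Dop i e)
    (flat : ∀ i j : Fin n, (Dop i).comp (Dop j) = (Dop j).comp (Dop i)) :
    FiniteDimensional k ↥(LinearMap.ker (deRhamD k n E Dop 0)) ∧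
    ∀ i : ℕ, FiniteDimensional k
      (↥(LinearMap.ker (deRhamD k n E Dop (i + 1))) ⧸
        (LinearMap.range (deRhamD k n E Dop i)).comap
          (LinearMap.ker (deRhamD k n E Dop (i + 1))).subtype) := by
  obtain ⟨V, hV, hV'⟩ := aux_main k n E Dop leibniz flat
  constructor
  · have : FiniteDimensional k (V.map (auxRes k n E 0)) := Module.Finite.iff_fg.mpr (hV.map _)
    refine Submodule.finiteDimensional_of_le (S₂ := V.map (auxRes k n E 0)) ?_
    intro x hx
    obtain ⟨y, v, hv, h⟩ := hV' (auxExt x) (auxExt_D k n E Dop 0 x hx)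
    refine ⟨v, hv, ?_⟩
    have h1 := congrArg (auxRes k n E 0) h
    rw [auxRes_Ext, map_add] at h1
    rw [h1]
    have h2 : auxRes k n E 0 (auxD k n E Dop y) = 0 := by
      funext N
      have h3 : N.1 = ∅ := Finset.card_eq_zero.mp N.2
      change ∑ i ∈ N.1, _ = _
      rw [h3]
      rfl
    rw [h2, zero_add]
  · intro i
    set R := LinearMap.range (deRhamD k n E Dop i) with hR
    have h0 : FiniteDimensional k ((V.map (auxRes k n E (i + 1))).map R.mkQ) :=
      Module.Finite.iff_fg.mpr ((hV.map _).map _)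
    let g := R.mapQ R LinearMap.id le_rfl
    let f : (↥(LinearMap.ker (deRhamD k n E Dop (i + 1))) ⧸
        R.comap (LinearMap.ker (deRhamD k n E Dop (i + 1))).subtype) →ₗ[k]
        (deRhamPiece n E (i + 1) ⧸ R) :=
      Submodule.mapQ _ R (LinearMap.ker (deRhamD k n E Dop (i + 1))).subtype le_rfl
    have hf : Function.Injective f := by
      rw [← LinearMap.ker_eq_bot, eq_bot_iff]
      intro z hz
      obtain ⟨z, rfl⟩ := Submodule.Quotient.mk_surjective _ z
      have hz' : Submodule.Quotient.mk (p := R) (z : deRhamPiece n E (i + 1)) = 0 := hz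
      rw [Submodule.Quotient.mk_eq_zero] at hz'
      rw [Submodule.mem_bot, Submodule.Quotient.mk_eq_zero]
      exact hz'
    have hmem : ∀ z, f z ∈ (V.map (auxRes k n E (i + 1))).map R.mkQ := by
      intro z
      obtain ⟨z, rfl⟩ := Submodule.Quotient.mk_surjective _ z
      obtain ⟨y, v, hv, h⟩ := hV' (auxExt z.1) (auxExt_D k n E Dop (i + 1) z.1 z.2)
      refine ⟨_, ⟨v, hv, rfl⟩, ?_⟩
      have h1 := congrArg (auxRes k n E (i + 1)) h
      rw [auxRes_Ext, map_add, auxRes_D] at h1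
      change Submodule.Quotient.mk (p := R) _ = Submodule.Quotient.mk (p := R) z.1
      rw [h1, eq_comm, Submodule.Quotient.eq, add_sub_cancel_right]
      exact ⟨_, rfl⟩
    exact Module.Finite.of_injective (f.codRestrict _ hmem)
      (fun a b hab => hf (congrArg Subtype.val hab))
end
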